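/- arXiv:1810.03566 — 6 statements merged into one kernel-verified Lean document; each statement's English description precedes it below -/
import Mathlib

section
/- Let M be a separable metric space with metric d and a Borel measure μ such that every ball has finite measure, and let 𝒜 be a doubling family of measurable subsets of M with constant C. Then the maximal operator M_𝒜 is of weak type (1,1): there is a constant C' such that for every f ∈ L¹(μ) and every λ > 0, μ({x : M_𝒜 f(x) > λ}) ≤ C' ‖f‖_{L¹}/λ. -/
open MeasureTheory Metric Set
open scoped ENNReal

noncomputable section

/-- `𝒜` is a doubling family with constant `C`:  it consists of measurable sets, for each
`Q ∈ 𝒜` the union `Q̃` of all `R ∈ 𝒜` meeting `Q` with `μ R ≤ 2 μ Q` is contained in some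
`S ∈ 𝒜` with `μ S ≤ C μ Q`, and either `μ M ≤ C μ Q` with `M ∈ 𝒜`, or some `R ∈ 𝒜`
contains `Q` with `2 μ Q ≤ μ R ≤ C μ Q`. -/
def DoublingFamily {M : Type*} [MeasurableSpace M] (μ : Measure M)
    (A : Set (Set M)) (C : ℝ) : Prop :=
  (∀ Q ∈ A, MeasurableSet Q) ∧
  ∀ Q ∈ A,
    (∃ S ∈ A, μ S ≤ ENNReal.ofReal C * μ Q ∧
      (⋃ R ∈ {R | R ∈ A ∧ (R ∩ Q).Nonempty ∧ μ R ≤ 2 * μ Q}, R) ⊆ S) ∧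
    ((μ Set.univ ≤ ENNReal.ofReal C * μ Q ∧ Set.univ ∈ A) ∨
      (∃ R ∈ A, Q ⊆ R ∧ 2 * μ Q ≤ μ R ∧ μ R ≤ ENNReal.ofReal C * μ Q))

/-- The maximal function associated with the family `𝒜`. -/
def maximalFn {M : Type*} [MeasurableSpace M] (μ : Measure M) (A : Set (Set M))
    (f : M → ℝ) (x : M) : ℝ≥0∞ :=
  ⨆ Q ∈ A, ⨆ (_ : x ∈ Q), (∫⁻ y in Q, ENNReal.ofReal |f y| ∂μ) / μ Q

/-- The maximal operator associated with a doubling family is of weak type `(1,1)`. -/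
theorem maximalFn_weak_type_one_one
    {M : Type*} [MetricSpace M] [TopologicalSpace.SeparableSpace M]
    [MeasurableSpace M] [BorelSpace M] (μ : Measure M)
    (hballs : ∀ (x : M) (r : ℝ), μ (Metric.ball x r) < ⊤)
    (A : Set (Set M)) (C : ℝ) (hC : 0 < C) (hA : DoublingFamily μ A C) :
    ∃ Cw : ℝ, 0 < Cw ∧ ∀ f : M → ℝ, Integrable f μ → ∀ lam : ℝ, 0 < lam →
      μ {x | ENNReal.ofReal lam < maximalFn μ A f x} ≤
        ENNReal.ofReal (Cw * (∫ x, |f x| ∂μ) / lam) := by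
  obtain ⟨hmeas, hD⟩ := hA
  refine ⟨C, hC, fun f hf lam hlam => ?_⟩
  set g : M → ℝ≥0∞ := fun y => ENNReal.ofReal |f y| with hg
  have hgfin : ∫⁻ y, g y ∂μ = ENNReal.ofReal (∫ x, |f x| ∂μ) :=
    (ofReal_integral_eq_lintegral_ofReal hf.abs (Filter.Eventually.of_forall fun _ => abs_nonneg _)).symm
  have hgtop : ∫⁻ y, g y ∂μ ≠ ⊤ := by rw [hgfin]; exact ENNReal.ofReal_ne_top
  set L := ENNReal.ofReal lam with hL
  have hL0 : L ≠ 0 := by simpa [hL] using hlam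
  have hLt : L ≠ ⊤ := ENNReal.ofReal_ne_top
  set t : Set (Set M) := {Q | Q ∈ A ∧ Q.Nonempty ∧ L < (∫⁻ y in Q, g y ∂μ) / μ Q} with ht
  have hQ0 : ∀ Q ∈ t, μ Q ≠ 0 := by
    rintro Q ⟨_, _, h⟩ h0
    rw [setLIntegral_measure_zero _ _ h0] at h
    simp at h
  have hQle : ∀ Q ∈ t, L * μ Q ≤ ∫⁻ y in Q, g y ∂μ := by
    rintro Q ⟨_, _, h⟩
    exact ENNReal.mul_le_of_le_div h.le
  have hQb : ∀ Q ∈ t, μ Q ≤ (∫⁻ y, g y ∂μ) / L := by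
    intro Q hQ
    rw [ENNReal.le_div_iff_mul_le (Or.inl hL0) (Or.inl hLt), mul_comm]
    exact (hQle Q hQ).trans (setLIntegral_le_lintegral _ _)
  have hBt : (∫⁻ y, g y ∂μ) / L ≠ ⊤ := ENNReal.div_ne_top hgtop hL0
  have hQt : ∀ Q ∈ t, μ Q ≠ ⊤ := fun Q hQ => ne_top_of_le_ne_top hBt (hQb Q hQ)
  obtain ⟨u, hut, hdisj, hcov⟩ := Vitali.exists_disjoint_subfamily_covering_enlargement
    (fun Q : Set M => Q) t (fun Q => (μ Q).toReal) 2 one_lt_two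
    (fun _ _ => ENNReal.toReal_nonneg) ((∫⁻ y, g y ∂μ) / L).toReal
    (fun Q hQ => ENNReal.toReal_mono hBt (hQb Q hQ)) (fun Q hQ => hQ.2.1)
  have hum : ∀ Q ∈ u, MeasurableSet Q := fun Q hQ => hmeas Q (hut hQ).1
  have hucount : u.Countable := by
    have : IsFiniteMeasure (μ.withDensity g) := isFiniteMeasure_withDensity hgtop
    have h := Measure.countable_meas_pos_of_disjoint_iUnion (μ := μ.withDensity g)
      (As := fun Q : u => (Q : Set M)) (fun Q => hum Q Q.2)
      (fun P Q hPQ => hdisj P.2 Q.2 (fun h => hPQ (Subtype.ext h)))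
    have h2 : {i : u | 0 < μ.withDensity g (i : Set M)} = Set.univ := by
      ext Q
      simp only [mem_setOf_eq, mem_univ, iff_true]
      rw [withDensity_apply _ (hum Q Q.2)]
      exact lt_of_lt_of_le (ENNReal.mul_pos hL0 (hQ0 Q (hut Q.2))) (hQle Q (hut Q.2))
    rw [h2] at h
    exact Set.countable_coe_iff.mp (Set.countable_univ_iff.mp h)
  have hS : ∀ Q : Set M, ∃ S : Set M, Q ∈ u → μ S ≤ ENNReal.ofReal C * μ Q ∧
      (⋃ R ∈ {R | R ∈ A ∧ (R ∩ Q).Nonempty ∧ μ R ≤ 2 * μ Q}, R) ⊆ S := by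
    intro Q
    by_cases hQ : Q ∈ u
    · obtain ⟨⟨S, _, h⟩, _⟩ := hD Q (hut hQ).1
      exact ⟨S, fun _ => h⟩
    · exact ⟨∅, fun h => absurd h hQ⟩
  choose S hS using hS
  have hsub : {x | L < maximalFn μ A f x} ⊆ ⋃ Q ∈ u, S Q := by
    intro x hx
    simp only [mem_setOf_eq, maximalFn, lt_iSup_iff] at hx
    obtain ⟨R, hRA, hxR, h⟩ := hx
    have hRt : R ∈ t := ⟨hRA, ⟨x, hxR⟩, h⟩
    obtain ⟨Q, hQu, hne, hle⟩ := hcov R hRt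
    refine mem_biUnion hQu ((hS Q hQu).2 (mem_biUnion (⟨hRA, hne, ?_⟩) hxR))
    rw [← ENNReal.toReal_le_toReal (hQt R hRt)
      (ENNReal.mul_ne_top (by simp) (hQt Q (hut hQu)))]
    simpa using hle
  have hsum : L * ∑' Q : u, μ (Q : Set M) ≤ ∫⁻ y, g y ∂μ := by
    rw [← ENNReal.tsum_mul_left]
    calc ∑' Q : u, L * μ (Q : Set M) ≤ ∑' Q : u, ∫⁻ y in (Q : Set M), g y ∂μ :=
          ENNReal.tsum_le_tsum fun Q => hQle Q (hut Q.2)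
      _ = ∫⁻ y in ⋃ Q ∈ u, Q, g y ∂μ := (lintegral_biUnion hucount hum hdisj g).symm
      _ ≤ _ := setLIntegral_le_lintegral _ _
  calc μ {x | L < maximalFn μ A f x} ≤ μ (⋃ Q ∈ u, S Q) := measure_mono hsub
    _ ≤ ∑' Q : u, μ (S Q) := measure_biUnion_le μ hucount S
    _ ≤ ∑' Q : u, ENNReal.ofReal C * μ (Q : Set M) :=
        ENNReal.tsum_le_tsum fun Q => (hS Q Q.2).1
    _ = ENNReal.ofReal C * ∑' Q : u, μ (Q : Set M) := ENNReal.tsum_mul_left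
    _ ≤ ENNReal.ofReal C * ((∫⁻ y, g y ∂μ) / L) := by
        gcongr
        rw [ENNReal.le_div_iff_mul_le (Or.inl hL0) (Or.inl hLt), mul_comm]
        exact hsum
    _ = ENNReal.ofReal (C * (∫ x, |f x| ∂μ) / lam) := by
        rw [hgfin, hL, ← ENNReal.ofReal_div_of_pos hlam, ← ENNReal.ofReal_mul hC.le, mul_div_assoc]

end
end

section
/- Let M be a separable metric space with metric d and a Borel measure μ such that every ball has finite measure, and let 𝒜 be a family of measurable subsets of M. Suppose 𝒜 satisfies the two conditions in the definition of a doubling family with constant C, except that in the definition of Q̃ the condition μ(R) ≤ 2μ(Q) is replaced by μ(R) ≤ μ(Q). Then 𝒜 is a doubling family (with the original definition, using μ(R) ≤ 2μ(Q)) with constant C². -/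
open MeasureTheory Metric Set
open scoped ENNReal

noncomputable section

/-- The variant of the doubling-family condition in which, in the definition of `Q̃`,
the requirement `μ R ≤ 2 μ Q` is replaced by `μ R ≤ μ Q`. -/
def DoublingFamilyVariant {M : Type*} [MeasurableSpace M] (μ : Measure M)
    (A : Set (Set M)) (C : ℝ) : Prop :=
  (∀ Q ∈ A, MeasurableSet Q) ∧
  ∀ Q ∈ A,
    (∃ S ∈ A, μ S ≤ ENNReal.ofReal C * μ Q ∧
      (⋃ R ∈ {R | R ∈ A ∧ (R ∩ Q).Nonempty ∧ μ R ≤ μ Q}, R) ⊆ S) ∧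
    ((μ Set.univ ≤ ENNReal.ofReal C * μ Q ∧ Set.univ ∈ A) ∨
      (∃ R ∈ A, Q ⊆ R ∧ 2 * μ Q ≤ μ R ∧ μ R ≤ ENNReal.ofReal C * μ Q))

/-- If a family satisfies the doubling-family conditions with `μ R ≤ 2 μ Q` replaced by
`μ R ≤ μ Q` (with constant `C`), then it is a doubling family with constant `C²`. -/
theorem doublingFamily_of_variant
    {M : Type*} [MetricSpace M] [TopologicalSpace.SeparableSpace M]
    [MeasurableSpace M] [BorelSpace M] (μ : Measure M)
    (hballs : ∀ (x : M) (r : ℝ), μ (Metric.ball x r) < ⊤)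
    (A : Set (Set M)) (C : ℝ) (hC : 0 < C)
    (hA : DoublingFamilyVariant μ A C) :
    DoublingFamily μ A (C ^ 2) := by
  obtain ⟨hm, h⟩ := hA
  refine ⟨hm, fun Q hQ => ?_⟩
  have hpow : ENNReal.ofReal (C ^ 2) * μ Q = ENNReal.ofReal C * (ENNReal.ofReal C * μ Q) := by
    rw [ENNReal.ofReal_pow hC.le, sq, mul_assoc]
  have hmono : ∀ T : Set M, Q ⊆ T → μ T ≤ ENNReal.ofReal C * μ Q →
      μ T ≤ ENNReal.ofReal (C ^ 2) * μ Q := by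
    intro T hT hT'
    rw [hpow]
    exact hT'.trans (mul_le_mul_right ((measure_mono hT).trans hT') _)
  obtain ⟨-, ⟨hu, huA⟩ | ⟨R', hR', hQR, h2, hle⟩⟩ := h Q hQ
  · have := hmono _ (subset_univ Q) hu
    exact ⟨⟨univ, huA, this, subset_univ _⟩, Or.inl ⟨this, huA⟩⟩
  · refine ⟨?_, Or.inr ⟨R', hR', hQR, h2, hmono _ hQR hle⟩⟩
    obtain ⟨⟨S, hS, hSle, hsub⟩, -⟩ := h R' hR'
    refine ⟨S, hS, ?_, ?_⟩
    · rw [hpow]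
      exact hSle.trans (mul_le_mul_right hle _)
    · refine iUnion₂_subset fun R hR => ?_
      obtain ⟨hRA, hne, hRle⟩ := hR
      refine Subset.trans ?_ hsub
      exact subset_biUnion_of_mem (u := fun R => R)
        (show R ∈ {R | R ∈ A ∧ (R ∩ R').Nonempty ∧ μ R ≤ μ R'} from
          ⟨hRA, hne.mono (inter_subset_inter_right _ hQR), hRle.trans h2⟩)

end
end

section
/- Let X and Y be complete separable metric spaces with Y compact, and let R ⊆ X × Y be a compact subset such that for each y ∈ Y the fiber R_y = {x : (x, y) ∈ R} is nonempty. Then there exists a Borel measurable map χ : Y → X such that (χ(y), y) ∈ R for all y ∈ Y. -/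
open TopologicalSpace

/-- Measurable selector: if `R ⊆ X × Y` is compact with `Y` compact and every fiber
`R_y = {x | (x, y) ∈ R}` nonempty, then there is a Borel measurable `χ : Y → X` with
`(χ y, y) ∈ R` for all `y`. -/
theorem measurable_selector_of_compact
    {X Y : Type*} [MetricSpace X] [CompleteSpace X] [SeparableSpace X]
    [MeasurableSpace X] [BorelSpace X]
    [MetricSpace Y] [CompleteSpace Y] [SeparableSpace Y] [CompactSpace Y]
    [MeasurableSpace Y] [BorelSpace Y]
    (R : Set (X × Y)) (hR : IsCompact R)
    (hfib : ∀ y : Y, ∃ x : X, (x, y) ∈ R) :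
    ∃ χ : Y → X, Measurable χ ∧ ∀ y : Y, (χ y, y) ∈ R := by
  rcases isEmpty_or_nonempty Y with hY | hY
  · exact ⟨fun y => (hY.false y).elim, measurable_of_empty _, fun y => (hY.false y).elim⟩
  obtain ⟨y0⟩ := hY
  obtain ⟨x0, hx0⟩ := hfib y0
  haveI : Nonempty R := ⟨⟨(x0, y0), hx0⟩⟩
  haveI : CompactSpace R := isCompact_iff_compactSpace.mp hR
  obtain ⟨g, hg, hgs⟩ := exists_nat_bool_continuous_surjective_of_compact R
  let e := cantorSetHomeomorphNatToBool
  let G : cantorSet → R := fun c => g (e c)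
  have hG : Continuous G := hg.comp e.continuous
  have hGs : Function.Surjective G := hgs.comp e.surjective
  let p : cantorSet → Y := fun c => (G c).1.2
  have hp : Continuous p := (continuous_snd.comp continuous_subtype_val).comp hG
  haveI : CompactSpace cantorSet := isCompact_iff_compactSpace.mp isCompact_cantorSet
  have hmin : ∀ y : Y, ∃ c : cantorSet, p c = y ∧ ∀ d, p d = y → c ≤ d := by
    intro y
    have hcl : IsCompact (p ⁻¹' {y}) := (isClosed_singleton.preimage hp).isCompact
    have hne : (p ⁻¹' {y}).Nonempty := by
      obtain ⟨x, hx⟩ := hfib y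
      obtain ⟨c, hc⟩ := hGs ⟨(x, y), hx⟩
      exact ⟨c, by simp [p, hc]⟩
    obtain ⟨c, hc, hmin⟩ := hcl.exists_isMinOn hne continuous_subtype_val.continuousOn
    exact ⟨c, hc, fun d hd => hmin hd⟩
  choose s hs hsm using hmin
  have hsmeas : Measurable s := by
    apply Measurable.subtype_mk (f := fun y => (s y : ℝ)) (h := fun y => (s y).2) ?_
    apply measurable_of_Iic
    intro a
    have : (fun y => (s y : ℝ)) ⁻¹' Set.Iic a = p '' {c | (c : ℝ) ≤ a} := by
      ext y
      constructor
      · intro h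
        exact ⟨s y, h, hs y⟩
      · rintro ⟨c, hc, rfl⟩
        have h1 : (s (p c) : ℝ) ≤ c := hsm _ c rfl
        exact h1.trans hc
    rw [this]
    have hcl : IsClosed {c : cantorSet | (c : ℝ) ≤ a} :=
      isClosed_le continuous_subtype_val continuous_const
    exact (hcl.isCompact.image hp).isClosed.measurableSet
  refine ⟨fun y => (G (s y)).1.1, ?_, fun y => ?_⟩
  · exact ((continuous_fst.comp continuous_subtype_val).comp hG).measurable.comp hsmeas
  · have h := (G (s y)).2
    have h2 : (G (s y)).1.2 = y := hs y
    rwa [← Prod.mk.eta (p := (G (s y)).1), h2] at h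
end

section
/- Let V be a finite-dimensional real vector space and let ‖·‖_d and ‖·‖_ρ be two norms on V induced by inner products. If there exists m ≥ 2 such that m‖x‖_ρ ≤ ‖x‖_d ≤ m²‖x‖_ρ for all x ∈ V, then there exists a finite sequence of inner-product norms n₀, n₁, …, n_k on V with n₀ = ‖·‖_d, n_k = ‖·‖_ρ, and 2 n_{i+1}(x) ≤ n_i(x) ≤ 16 n_{i+1}(x) for all x ∈ V and all i = 0, …, k−1. -/
noncomputable section

/-- `n` is a norm on `V` induced by an inner product, i.e. `n x = √(Q x)` for a positive
definite quadratic form `Q`. -/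
def IsInnerProductNorm {V : Type*} [AddCommGroup V] [Module ℝ V] (n : V → ℝ) : Prop :=
  ∃ Q : QuadraticForm ℝ V, Q.PosDef ∧ ∀ x : V, n x = Real.sqrt (Q x)

theorem chain_step_sqrt {p q : ℝ} (hp : 0 ≤ p) (hq : 0 ≤ q) (h1 : 4 * q ≤ p)
    (h2 : p ≤ 256 * q) :
    2 * Real.sqrt q ≤ Real.sqrt p ∧ Real.sqrt p ≤ 16 * Real.sqrt q := by
  constructor
  · apply Real.le_sqrt_of_sq_le
    rw [mul_pow, Real.sq_sqrt hq]; linarith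
  · rw [Real.sqrt_le_left (by positivity), mul_pow, Real.sq_sqrt hq]; linarith

/-- Between two comparable inner-product norms (with `m ‖x‖_ρ ≤ ‖x‖_d ≤ m² ‖x‖_ρ`,
`m ≥ 2`) there is a doubling chain of inner-product norms. -/
theorem doubling_chain_of_inner_product_norms
    {V : Type*} [AddCommGroup V] [Module ℝ V] [FiniteDimensional ℝ V]
    (nd nρ : V → ℝ) (hd : IsInnerProductNorm nd) (hρ : IsInnerProductNorm nρ)
    (m : ℝ) (hm : 2 ≤ m)
    (hlow : ∀ x : V, m * nρ x ≤ nd x) (hhigh : ∀ x : V, nd x ≤ m ^ 2 * nρ x) :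
    ∃ (k : ℕ) (ns : ℕ → V → ℝ),
      (∀ i ≤ k, IsInnerProductNorm (ns i)) ∧
      ns 0 = nd ∧ ns k = nρ ∧
      ∀ i < k, ∀ x : V, 2 * ns (i + 1) x ≤ ns i x ∧ ns i x ≤ 16 * ns (i + 1) x := by
  obtain ⟨D, hD, hnd⟩ := hd
  obtain ⟨R, hR, hnr⟩ := hρ
  have hD0 : ∀ x, 0 ≤ D x := hD.nonneg
  have hR0 : ∀ x, 0 ≤ R x := hR.nonneg
  have hl : ∀ x, 0 ≤ D x - m ^ 2 * R x := by
    intro x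
    have h := hlow x
    rw [hnd, hnr] at h
    have h' := pow_le_pow_left₀ (by positivity) h 2
    rw [mul_pow, Real.sq_sqrt (hR0 x), Real.sq_sqrt (hD0 x)] at h'
    linarith
  have hh : ∀ x, D x ≤ m ^ 4 * R x := by
    intro x
    have h := hhigh x
    rw [hnd, hnr] at h
    have h' := pow_le_pow_left₀ (by positivity) h 2
    rw [mul_pow, Real.sq_sqrt (hR0 x), Real.sq_sqrt (hD0 x)] at h'
    nlinarith
  obtain ⟨k, hk1, hk2⟩ := exists_nat_pow_near (show (1 : ℝ) ≤ m by linarith)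
    (show (1 : ℝ) < 2 by norm_num)
  have hk : 1 ≤ k := by
    rcases Nat.eq_zero_or_pos k with h | h
    · subst h; norm_num at hk2; linarith
    · exact h
  have hm2 : (4 : ℝ) ^ k ≤ m ^ 2 := by
    have h := pow_le_pow_left₀ (by positivity) hk1 2
    rw [← pow_mul, mul_comm, pow_mul] at h
    norm_num at h; exact h
  have hm2' : m ^ 2 ≤ (4 : ℝ) ^ (k + 1) := by
    have h := pow_le_pow_left₀ (by positivity) hk2.le 2
    rw [← pow_mul, mul_comm, pow_mul] at h
    norm_num at h; exact h
  have hm4 : m ^ 4 ≤ (16 : ℝ) ^ (k + 1) := by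
    have h := pow_le_pow_left₀ (by positivity) hk2.le 4
    rw [← pow_mul, mul_comm, pow_mul] at h
    norm_num at h; exact h
  let a : ℕ → ℝ := fun i => if i = k then 0 else ((256 : ℝ) ^ i)⁻¹
  let b : ℕ → ℝ := fun i => if i = 0 then m ^ 2 else (4 : ℝ) ^ (k - i)
  have ha : ∀ i, 0 ≤ a i := by intro i; simp only [a]; split_ifs <;> positivity
  have hb : ∀ i, 0 < b i := by intro i; simp only [b]; split_ifs <;> positivity
  let Q : ℕ → QuadraticForm ℝ V := fun i => a i • (D - (m ^ 2) • R) + b i • R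
  have hQ : ∀ i x, Q i x = a i * (D x - m ^ 2 * R x) + b i * R x := by
    intro i x; simp [Q]
  have hQ0 : ∀ i x, 0 ≤ Q i x := by
    intro i x; rw [hQ]
    exact add_nonneg (mul_nonneg (ha i) (hl x)) (mul_nonneg (hb i).le (hR0 x))
  refine ⟨k, fun i x => Real.sqrt (Q i x), ?_, ?_, ?_, ?_⟩
  · intro i _
    refine ⟨Q i, ?_, fun x => rfl⟩
    intro x hx
    rw [hQ]
    exact add_pos_of_nonneg_of_pos (mul_nonneg (ha i) (hl x)) (mul_pos (hb i) (hR x hx))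
  · funext x
    have h0 : (0 : ℕ) ≠ k := by omega
    simp only [hQ, hnd, a, b, if_neg h0]
    congr 1; simp
  · funext x
    have h0 : k ≠ 0 := by omega
    simp only [hQ, hnr, a, b, if_neg h0]
    congr 1; simp
  · intro i hi x
    have hik : i ≠ k := by omega
    have hai : a i = ((256 : ℝ) ^ i)⁻¹ := by simp only [a, if_neg hik]
    have hbs : b (i + 1) = (4 : ℝ) ^ (k - (i + 1)) := by simp [b]
    have hpow : (4 : ℝ) ^ (k - i) = 4 * 4 ^ (k - (i + 1)) := by
      rw [← pow_succ']; congr 1; omega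
    have hb1 : 4 * b (i + 1) ≤ b i := by
      rw [hbs, ← hpow]; simp only [b]; split_ifs with h
      · subst h; simpa using hm2
      · exact le_rfl
    have hb2 : b i ≤ 256 * b (i + 1) := by
      have h4 : (0 : ℝ) < 4 ^ (k - (i + 1)) := by positivity
      rw [hbs]; simp only [b]; split_ifs with h
      · subst h
        rw [pow_succ (4 : ℝ) k] at hm2'
        simp only [Nat.sub_zero] at hpow
        linarith
      · rw [hpow]; linarith
    have hp := hl x
    have hr := hR0 x
    have has : (256 : ℝ) * ((256 : ℝ) ^ (i + 1))⁻¹ = ((256 : ℝ) ^ i)⁻¹ := by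
      rw [pow_succ]; field_simp
    have ha1 : 4 * a (i + 1) ≤ a i := by
      rw [hai, ← has]; simp only [a]; split_ifs
      · simp only [mul_zero]; positivity
      · have : (0 : ℝ) ≤ ((256 : ℝ) ^ (i + 1))⁻¹ := by positivity
        linarith
    apply chain_step_sqrt (hQ0 _ _) (hQ0 _ _)
    · rw [hQ, hQ]
      have e1 := mul_le_mul_of_nonneg_right ha1 hp
      have e2 := mul_le_mul_of_nonneg_right hb1 hr
      linarith
    · rw [hQ, hQ]
      by_cases hlast : i + 1 = k
      · have z1 : a (i + 1) = 0 := by simp [a, hlast]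
        have z2 : b (i + 1) = 1 := by rw [hbs, hlast]; simp
        rw [z1, z2]
        have hP : D x - m ^ 2 * R x ≤ (m ^ 4 - m ^ 2) * R x := by
          have := hh x; linarith
        have e1 := mul_le_mul_of_nonneg_left hP (ha i)
        have key : a i * (m ^ 4 - m ^ 2) + b i ≤ 256 := by
          rw [hai]
          by_cases h : i = 0
          · subst h
            subst hlast
            simp only [b, if_true]
            norm_num at hm4 ⊢
            linarith
          · have hbi : b i = 4 := by
              simp only [b, if_neg h]
              rw [show k - i = 1 by omega, pow_one]
            rw [hbi]
            have h1 : (m ^ 4 - m ^ 2) ≤ 252 * 256 ^ i := by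
              obtain ⟨j, rfl⟩ := Nat.exists_eq_succ_of_ne_zero h
              rw [← hlast] at hm4
              have h2 : (16 : ℝ) ^ j ≤ 256 ^ j := pow_le_pow_left₀ (by norm_num) (by norm_num) j
              have h3 : (0 : ℝ) < 16 ^ j := by positivity
              have h4 : (16 : ℝ) ^ (j.succ + 1 + 1) = 4096 * 16 ^ j := by
                rw [Nat.succ_eq_add_one]; ring
              have h5 : (256 : ℝ) ^ j.succ = 256 * 256 ^ j := by
                rw [Nat.succ_eq_add_one]; ring
              rw [h4] at hm4
              rw [h5]
              have := sq_nonneg m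
              linarith
            have h2 : ((256 : ℝ) ^ i)⁻¹ * (m ^ 4 - m ^ 2) ≤ 252 := by
              rw [inv_mul_le_iff₀ (by positivity)]; linarith
            linarith
        have e2 := mul_le_mul_of_nonneg_right key hr
        linarith
      · have ha2 : a i = 256 * a (i + 1) := by
          rw [hai, ← has]; simp only [a, if_neg hlast]
        have e2 := mul_le_mul_of_nonneg_right hb2 hr
        rw [ha2]
        linarith

end
end

section
/- Let M be a separable metric space with metric d and a Borel measure μ such that every ball has finite measure, and suppose (M,d,μ) satisfies the local doubling property. Then (M,d,μ) satisfies the Calderón–Zygmund property if and only if it satisfies the Calderón–Zygmund property on large scales. -/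
open MeasureTheory Metric Set
open scoped ENNReal

noncomputable section

/-- The Calderón–Zygmund property for a distance function `d` and a Borel measure `μ`. -/
def HasCZProperty {M : Type*} [MeasurableSpace M] (d : M → M → ℝ) (μ : Measure M) : Prop :=
  ∃ C : ℝ, 0 < C ∧
    ∀ f : M → ℝ, Integrable f μ → ∀ lam : ℝ, 0 < lam →
      ENNReal.ofReal (C * ∫ x, |f x| ∂μ) < ENNReal.ofReal lam * μ Set.univ →
      ∃ (fs : ℕ → M → ℝ) (g : M → ℝ) (Q : ℕ → Set M) (r : ℕ → ℝ) (c : ℕ → M),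
        (∀ i, Integrable (fs i) μ) ∧
        (∀ i, MeasurableSet (Q i)) ∧
        (∀ i, 0 < r i) ∧
        (∀ᵐ x ∂μ, f x = (∑' i, fs i x) + g x) ∧
        (∀ i, ∀ x, x ∉ Q i → fs i x = 0) ∧
        (∀ i, ∫ x, fs i x ∂μ = 0) ∧
        (∀ i, Q i ⊆ {y | d y (c i) < C * r i}) ∧
        (∑' i, μ {y | ∃ q ∈ Q i, d y q < r i}) ≤ ENNReal.ofReal (C * (∫ x, |f x| ∂μ) / lam) ∧
        (∑' i, ENNReal.ofReal (∫ x, |fs i x| ∂μ)) ≤ ENNReal.ofReal (C * ∫ x, |f x| ∂μ) ∧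
        (∀ᵐ x ∂μ, |g x| ≤ C * lam)

/-- The Calderón–Zygmund property on large scales: as `HasCZProperty`, but all radii
`rᵢ` exceed `1/2` and `g` is only required to have averages over unit balls
bounded by `C · λ`. -/
def HasCZPropertyLargeScale {M : Type*} [MeasurableSpace M] (d : M → M → ℝ)
    (μ : Measure M) : Prop :=
  ∃ C : ℝ, 0 < C ∧
    ∀ f : M → ℝ, Integrable f μ → ∀ lam : ℝ, 0 < lam →
      ENNReal.ofReal (C * ∫ x, |f x| ∂μ) < ENNReal.ofReal lam * μ Set.univ →
      ∃ (fs : ℕ → M → ℝ) (g : M → ℝ) (Q : ℕ → Set M) (r : ℕ → ℝ) (c : ℕ → M),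
        (∀ i, Integrable (fs i) μ) ∧
        (∀ i, MeasurableSet (Q i)) ∧
        (∀ i, 1 / 2 < r i) ∧
        (∀ᵐ x ∂μ, f x = (∑' i, fs i x) + g x) ∧
        (∀ i, ∀ x, x ∉ Q i → fs i x = 0) ∧
        (∀ i, ∫ x, fs i x ∂μ = 0) ∧
        (∀ i, Q i ⊆ {y | d y (c i) < C * r i}) ∧
        (∑' i, μ {y | ∃ q ∈ Q i, d y q < r i}) ≤ ENNReal.ofReal (C * (∫ x, |f x| ∂μ) / lam) ∧
        (∑' i, ENNReal.ofReal (∫ x, |fs i x| ∂μ)) ≤ ENNReal.ofReal (C * ∫ x, |f x| ∂μ) ∧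
        (∀ x : M, ∫⁻ y in {y | d y x < 1}, ENNReal.ofReal |g y| ∂μ ≤
          ENNReal.ofReal (C * lam) * μ {y | d y x < 1})

/-- A Calderón–Zygmund type decomposition with general index set. -/
def CZDec {M : Type*} [MetricSpace M] [MeasurableSpace M] (ι : Type*) (μ : Measure M)
    (ρ C : ℝ) (f g : M → ℝ) (S T : ℝ≥0∞) : Prop :=
  ∃ (fs : ι → M → ℝ) (Q : ι → Set M) (r : ι → ℝ) (c : ι → M),
    (∀ i, Integrable (fs i) μ) ∧
    (∀ i, MeasurableSet (Q i)) ∧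
    (∀ i, ρ < r i) ∧
    (∀ᵐ x ∂μ, f x = (∑' i, fs i x) + g x) ∧
    (∀ i, ∀ x, x ∉ Q i → fs i x = 0) ∧
    (∀ i, ∫ x, fs i x ∂μ = 0) ∧
    (∀ i, Q i ⊆ {y | dist y (c i) < C * r i}) ∧
    (∑' i, μ {y | ∃ q ∈ Q i, dist y q < r i}) ≤ S ∧
    (∑' i, ∫⁻ x, ‖fs i x‖ₑ ∂μ) ≤ T

lemma ofReal_integral_abs_eq {M : Type*} [MeasurableSpace M] {μ : Measure M} {f : M → ℝ}
    (hf : Integrable f μ) : ENNReal.ofReal (∫ x, |f x| ∂μ) = ∫⁻ x, ‖f x‖ₑ ∂μ := by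
  have := ofReal_integral_norm_eq_lintegral_enorm hf
  simpa only [Real.norm_eq_abs] using this

lemma ae_summable_of_lintegral {M : Type*} [MeasurableSpace M] {μ : Measure M} {ι : Type*}
    [Countable ι] {fs : ι → M → ℝ} (hf : ∀ i, Integrable (fs i) μ)
    (h : ∑' i, ∫⁻ x, ‖fs i x‖ₑ ∂μ ≠ ⊤) : ∀ᵐ x ∂μ, Summable (fun i => fs i x) := by
  rw [← lintegral_tsum (fun i ↦ (hf i).1.enorm)] at h
  filter_upwards [ae_lt_top' (AEMeasurable.tsum (fun i ↦ (hf i).1.enorm)) h] with x hx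
  exact (tsum_enorm_ne_top_iff_summable_norm.1 hx.ne).of_norm

lemma lintegral_enorm_tsum_le {M : Type*} [MeasurableSpace M] {μ : Measure M} {ι : Type*}
    [Countable ι] {fs : ι → M → ℝ} (hf : ∀ i, AEStronglyMeasurable (fs i) μ) :
    ∫⁻ x, ‖∑' i, fs i x‖ₑ ∂μ ≤ ∑' i, ∫⁻ x, ‖fs i x‖ₑ ∂μ := by
  rw [← lintegral_tsum (fun i ↦ (hf i).enorm)]
  exact lintegral_mono fun x => enorm_tsum_le_tsum_enorm

lemma integrable_tsum_of_lintegral {M : Type*} [MeasurableSpace M] {μ : Measure M} {ι : Type*}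
    [Countable ι] {fs : ι → M → ℝ} (hf : ∀ i, Integrable (fs i) μ)
    (h : ∑' i, ∫⁻ x, ‖fs i x‖ₑ ∂μ ≠ ⊤) : Integrable (fun x => ∑' i, fs i x) μ := by
  refine ⟨AEStronglyMeasurable.tsum fun i => (hf i).1, ?_⟩
  exact lt_of_le_of_lt (lintegral_enorm_tsum_le fun i => (hf i).1) h.lt_top

lemma CZDec.toNat {M : Type*} [MetricSpace M] [MeasurableSpace M] {ι : Type*} [Countable ι]
    [Nonempty M] {μ : Measure M}
    {ρ C : ℝ} {f g : M → ℝ} {S T : ℝ≥0∞} (h : CZDec ι μ ρ C f g S T) :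
    CZDec ℕ μ ρ C f g S T := by
  obtain ⟨fs, Q, r, c, h1, h2, h3, h4, h5, h6, h7, h8, h9⟩ := h
  obtain ⟨e, he⟩ := exists_injective_nat ι
  obtain ⟨m⟩ := ‹Nonempty M›
  have key : ∀ n, (∃ i, e i = n) ∨ (¬ ∃ i, e i = n) := fun n => em _
  refine ⟨Function.extend e fs 0, Function.extend e Q (fun _ => ∅),
    Function.extend e r (fun _ => ρ + 1), Function.extend e c (fun _ => m),
    ?_, ?_, ?_, ?_, ?_, ?_, ?_, ?_, ?_⟩
  · intro n
    rcases key n with ⟨i, rfl⟩ | hn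
    · simpa only [he.extend_apply] using h1 i
    · rw [Function.extend_apply' _ _ _ hn]; exact integrable_zero _ _ _
  · intro n
    rcases key n with ⟨i, rfl⟩ | hn
    · simpa only [he.extend_apply] using h2 i
    · rw [Function.extend_apply' _ _ _ hn]; exact MeasurableSet.empty
  · intro n
    rcases key n with ⟨i, rfl⟩ | hn
    · simpa only [he.extend_apply] using h3 i
    · rw [Function.extend_apply' _ _ _ hn]; linarith
  · filter_upwards [h4] with x hx
    rw [hx, ← tsum_extend_zero he (fun i => fs i x)]
    congr 2
    ext n
    rcases key n with ⟨i, rfl⟩ | hn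
    · simp only [he.extend_apply]
    · simp [Function.extend_apply' _ _ _ hn]
  · intro n
    rcases key n with ⟨i, rfl⟩ | hn
    · simpa only [he.extend_apply] using h5 i
    · intro x _; rw [Function.extend_apply' _ _ _ hn]; rfl
  · intro n
    rcases key n with ⟨i, rfl⟩ | hn
    · simpa only [he.extend_apply] using h6 i
    · rw [Function.extend_apply' _ _ _ hn]; simp
  · intro n
    rcases key n with ⟨i, rfl⟩ | hn
    · simpa only [he.extend_apply] using h7 i
    · rw [Function.extend_apply' _ _ _ hn]; simp
  · refine le_trans (le_of_eq ?_) h8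
    rw [← tsum_extend_zero he]
    congr 1
    ext n
    rcases key n with ⟨i, rfl⟩ | hn
    · simp only [he.extend_apply]
    · simp [Function.extend_apply' _ _ _ hn]
  · refine le_trans (le_of_eq ?_) h9
    rw [← tsum_extend_zero he]
    congr 1
    ext n
    rcases key n with ⟨i, rfl⟩ | hn
    · simp only [he.extend_apply]
    · simp [Function.extend_apply' _ _ _ hn]

lemma CZDec.trans {M : Type*} [MetricSpace M] [MeasurableSpace M] {ι κ : Type*} [Countable ι]
    [Countable κ] {μ : Measure M}
    {ρ ρ₁ ρ₂ C C₁ C₂ : ℝ} {f g h : M → ℝ} {S T S₁ T₁ S₂ T₂ : ℝ≥0∞}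
    (H₁ : CZDec ι μ ρ₁ C₁ f g S₁ T₁) (H₂ : CZDec κ μ ρ₂ C₂ g h S₂ T₂)
    (hT₁ : T₁ ≠ ⊤) (hT₂ : T₂ ≠ ⊤) (hρ : 0 ≤ ρ) (hρ₁ : ρ ≤ ρ₁) (hρ₂ : ρ ≤ ρ₂)
    (hC₁ : C₁ ≤ C) (hC₂ : C₂ ≤ C) (hS : S₁ + S₂ ≤ S) (hT : T₁ + T₂ ≤ T) :
    CZDec (ι ⊕ κ) μ ρ C f h S T := by
  obtain ⟨fs, Q, r, c, h1, h2, h3, h4, h5, h6, h7, h8, h9⟩ := H₁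
  obtain ⟨fs', Q', r', c', h1', h2', h3', h4', h5', h6', h7', h8', h9'⟩ := H₂
  refine ⟨Sum.elim fs fs', Sum.elim Q Q', Sum.elim r r', Sum.elim c c',
    ?_, ?_, ?_, ?_, ?_, ?_, ?_, ?_, ?_⟩
  · rintro (i | i); exacts [h1 i, h1' i]
  · rintro (i | i); exacts [h2 i, h2' i]
  · rintro (i | i); exacts [hρ₁.trans_lt (h3 i), hρ₂.trans_lt (h3' i)]
  · filter_upwards [h4, h4', ae_summable_of_lintegral h1 (ne_top_of_le_ne_top hT₁ h9),
      ae_summable_of_lintegral h1' (ne_top_of_le_ne_top hT₂ h9')] with x a b s s'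
    rw [a, b, Summable.tsum_sum (f := fun i => Sum.elim fs fs' i x) s s']
    simp only [Sum.elim_inl, Sum.elim_inr]; ring
  · rintro (i | i); exacts [h5 i, h5' i]
  · rintro (i | i); exacts [h6 i, h6' i]
  · rintro (i | i) y hy
    · exact lt_of_lt_of_le (h7 i hy) (mul_le_mul_of_nonneg_right hC₁ (show 0 ≤ r i by linarith [h3 i]))
    · exact lt_of_lt_of_le (h7' i hy) (mul_le_mul_of_nonneg_right hC₂ (show 0 ≤ r' i by linarith [h3' i]))
  · rw [Summable.tsum_sum ENNReal.summable ENNReal.summable]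
    exact (add_le_add h8 h8').trans hS
  · rw [Summable.tsum_sum ENNReal.summable ENNReal.summable]
    exact (add_le_add h9 h9').trans hT

lemma CZDec.integrable {M : Type*} [MetricSpace M] [MeasurableSpace M] {ι : Type*} [Countable ι]
    {μ : Measure M} {ρ C : ℝ} {f g : M → ℝ} {S T : ℝ≥0∞} (h : CZDec ι μ ρ C f g S T)
    (hT : T ≠ ⊤) (hf : Integrable f μ) :
    Integrable g μ ∧ ∫⁻ x, ‖g x‖ₑ ∂μ ≤ ∫⁻ x, ‖f x‖ₑ ∂μ + T := by
  obtain ⟨fs, Q, r, c, h1, h2, h3, h4, h5, h6, h7, h8, h9⟩ := h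
  have hi := integrable_tsum_of_lintegral h1 (ne_top_of_le_ne_top hT h9)
  have he : (fun x => f x - ∑' i, fs i x) =ᵐ[μ] g := by
    filter_upwards [h4] with x hx
    rw [hx]; ring
  refine ⟨(hf.sub hi).congr he, ?_⟩
  have : ∫⁻ x, ‖g x‖ₑ ∂μ = ∫⁻ x, ‖f x - ∑' i, fs i x‖ₑ ∂μ :=
    lintegral_congr_ae (by filter_upwards [he] with x hx; rw [hx])
  rw [this]
  calc _ ≤ ∫⁻ x, ‖f x‖ₑ + ‖∑' i, fs i x‖ₑ ∂μ := lintegral_mono fun x => enorm_sub_le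
    _ = ∫⁻ x, ‖f x‖ₑ ∂μ + ∫⁻ x, ‖∑' i, fs i x‖ₑ ∂μ := lintegral_add_left' hf.1.enorm _
    _ ≤ _ := by
      gcongr
      exact (lintegral_enorm_tsum_le fun i => (h1 i).1).trans h9

lemma doubling_balls {M : Type*} [MetricSpace M] [MeasurableSpace M] {μ : Measure M}
    (hloc : ∀ R : ℝ, 0 < R → ∃ CR : ℝ, 0 < CR ∧ ∀ (x : M) (r : ℝ), 0 < r → r ≤ R →
      μ (Metric.ball x (2 * r)) ≤ ENNReal.ofReal CR * μ (Metric.ball x r))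
    (R : ℝ) (hR : 0 < R) (K : ℝ) :
    ∃ D : ℝ, 1 ≤ D ∧ ∀ (x : M) (r : ℝ), 0 < r → r ≤ R →
      μ (Metric.ball x (K * r)) ≤ ENNReal.ofReal D * μ (Metric.ball x r) := by
  have key : ∀ n : ℕ, ∃ D : ℝ, 1 ≤ D ∧ ∀ (x : M) (r : ℝ), 0 < r → r ≤ R →
      μ (Metric.ball x (2 ^ n * r)) ≤ ENNReal.ofReal D * μ (Metric.ball x r) := by
    intro n
    induction n with
    | zero => exact ⟨1, le_rfl, fun x r _ _ => by simp⟩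
    | succ n ih =>
      obtain ⟨D, hD, h⟩ := ih
      obtain ⟨E, hE, h'⟩ := hloc (2 ^ n * R) (by positivity)
      refine ⟨max 1 E * D, by nlinarith [le_max_left 1 E], fun x r hr hrR => ?_⟩
      have e : (2 : ℝ) ^ (n + 1) * r = 2 * (2 ^ n * r) := by ring
      rw [e, ENNReal.ofReal_mul (by positivity), mul_assoc]
      refine (h' x (2 ^ n * r) (by positivity) (by gcongr)).trans ?_
      gcongr
      · exact le_max_right _ _
      · exact h x r hr hrR
  obtain ⟨n, hn⟩ := pow_unbounded_of_one_lt K (one_lt_two)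
  obtain ⟨D, hD, h⟩ := key n
  exact ⟨D, hD, fun x r hr hrR => (measure_mono (ball_subset_ball (by gcongr))).trans (h x r hr hrR)⟩

lemma doubling_closedBalls {M : Type*} [MetricSpace M] [MeasurableSpace M] {μ : Measure M}
    (hloc : ∀ R : ℝ, 0 < R → ∃ CR : ℝ, 0 < CR ∧ ∀ (x : M) (r : ℝ), 0 < r → r ≤ R →
      μ (Metric.ball x (2 * r)) ≤ ENNReal.ofReal CR * μ (Metric.ball x r))
    (R : ℝ) (hR : 0 < R) (K : ℝ) :
    ∃ D : ℝ, 1 ≤ D ∧ ∀ (x : M) (r : ℝ), 0 < r → r ≤ R →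
      μ (closedBall x (K * r)) ≤ ENNReal.ofReal D * μ (closedBall x r) := by
  obtain ⟨D, hD, h⟩ := doubling_balls hloc R hR (K + 1)
  refine ⟨D, hD, fun x r hr hrR => ?_⟩
  refine (measure_mono (closedBall_subset_ball (by linarith))).trans ((h x r hr hrR).trans ?_)
  gcongr
  exact ball_subset_closedBall

lemma isUnifLocDoubling {M : Type*} [MetricSpace M] [MeasurableSpace M] {μ : Measure M}
    (hloc : ∀ R : ℝ, 0 < R → ∃ CR : ℝ, 0 < CR ∧ ∀ (x : M) (r : ℝ), 0 < r → r ≤ R →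
      μ (Metric.ball x (2 * r)) ≤ ENNReal.ofReal CR * μ (Metric.ball x r)) :
    IsUnifLocDoublingMeasure μ := by
  obtain ⟨D, hD, h⟩ := doubling_closedBalls hloc 1 one_pos 2
  refine ⟨⟨D.toNNReal, ?_⟩⟩
  filter_upwards [Ioc_mem_nhdsGT (zero_lt_one (α := ℝ))] with ε hε x
  exact h x ε hε.1 hε.2

lemma ae_le_of_balls {M : Type*} [MetricSpace M] [TopologicalSpace.SeparableSpace M]
    [MeasurableSpace M] [BorelSpace M] {μ : Measure M}
    (hballs : ∀ (x : M) (r : ℝ), μ (Metric.ball x r) < ⊤)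
    (hloc : ∀ R : ℝ, 0 < R → ∃ CR : ℝ, 0 < CR ∧ ∀ (x : M) (r : ℝ), 0 < r → r ≤ R →
      μ (Metric.ball x (2 * r)) ≤ ENNReal.ofReal CR * μ (Metric.ball x r))
    {g : M → ℝ} (hg : Integrable g μ) (δ : ℕ → ℝ) (hδ : ∀ n, 0 < δ n)
    (hδ0 : Filter.Tendsto δ Filter.atTop (nhds 0)) (K : ℝ) (hK : 0 ≤ K) :
    ∀ᵐ x ∂μ, (∀ n, ∫⁻ y in closedBall x (δ n), ‖g y‖ₑ ∂μ ≤
      ENNReal.ofReal K * μ (closedBall x (δ n))) → |g x| ≤ K := by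
  have := isUnifLocDoubling hloc
  have : SecondCountableTopology M := UniformSpace.secondCountable_of_separable M
  have : IsLocallyFiniteMeasure μ :=
    ⟨fun x => ⟨ball x 1, ball_mem_nhds x one_pos, hballs x 1⟩⟩
  have hl : LocallyIntegrable (fun x => |g x|) μ := hg.abs.locallyIntegrable
  filter_upwards [IsUnifLocDoublingMeasure.ae_tendsto_average μ hl 1] with x hx hn
  have ht := hx (l := Filter.atTop) (fun _ : ℕ => x) δ
    (tendsto_nhdsWithin_iff.2 ⟨hδ0, Filter.Eventually.of_forall hδ⟩)
    (Filter.Eventually.of_forall fun n => by simpa using (hδ n).le)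
  refine le_of_tendsto' ht fun n => ?_
  have hfin : μ (closedBall x (δ n)) ≠ ⊤ :=
    ((measure_mono (closedBall_subset_ball (lt_add_one _))).trans_lt (hballs x _)).ne
  rw [setAverage_eq, smul_eq_mul]
  have h1 : ∫ y in closedBall x (δ n), |g y| ∂μ ≤ K * μ.real (closedBall x (δ n)) := by
    have := hn n
    rw [← ofReal_integral_abs_eq hg.integrableOn, ← ENNReal.ofReal_toReal hfin,
      ← ENNReal.ofReal_mul hK] at this
    exact (ENNReal.ofReal_le_ofReal_iff (by positivity)).1 this
  rcases eq_or_lt_of_le (measureReal_nonneg (μ := μ) (s := closedBall x (δ n))) with h0 | h0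
  · rw [← h0]; simpa using hK
  · rw [inv_mul_le_iff₀ h0, mul_comm]; exact h1

lemma local_cz {M : Type*} [MetricSpace M] [TopologicalSpace.SeparableSpace M]
    [MeasurableSpace M] [BorelSpace M] [Nonempty M] {μ : Measure M}
    (hballs : ∀ (x : M) (r : ℝ), μ (Metric.ball x r) < ⊤)
    (hloc : ∀ R : ℝ, 0 < R → ∃ CR : ℝ, 0 < CR ∧ ∀ (x : M) (r : ℝ), 0 < r → r ≤ R →
      μ (Metric.ball x (2 * r)) ≤ ENNReal.ofReal CR * μ (Metric.ball x r))
    (C : ℝ) (hC : 0 < C) :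
    ∃ D : ℝ, 0 < D ∧ ∀ g : M → ℝ, Integrable g μ → ∀ lam : ℝ, 0 < lam →
      (∀ x, ∫⁻ y in ball x 1, ‖g y‖ₑ ∂μ ≤ ENNReal.ofReal (C * lam) * μ (ball x 1)) →
      ∃ h : M → ℝ, CZDec ℕ μ 0 6 g h (ENNReal.ofReal D * (∫⁻ x, ‖g x‖ₑ ∂μ) / ENNReal.ofReal lam)
        (2 * ∫⁻ x, ‖g x‖ₑ ∂μ) ∧ ∀ᵐ x ∂μ, |h x| ≤ D * lam := by
  obtain ⟨D, hD, hdoub⟩ := doubling_closedBalls hloc 1 one_pos 6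
  have hD0 : 0 < D := by linarith
  obtain ⟨K, hK⟩ : ∃ K, K = C * D + 1 := ⟨_, rfl⟩
  have hK1 : 1 ≤ K := by rw [hK]; nlinarith
  refine ⟨K * D, by positivity, fun g hg lam hlam hav => ?_⟩
  have hfin : ∀ x r, μ (closedBall x r) ≠ ⊤ := fun x r =>
    ((measure_mono (closedBall_subset_ball (lt_add_one _))).trans_lt (hballs x _)).ne
  obtain ⟨δ, hδ⟩ : ∃ δ : ℕ → ℝ, δ = fun n => (1 / 2) * (1 / 5 : ℝ) ^ n := ⟨_, rfl⟩
  have hδpos : ∀ n, 0 < δ n := fun n => by rw [hδ]; positivity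
  have hδ0 : δ 0 = 1 / 2 := by rw [hδ]; norm_num
  have hδs : ∀ n, 5 * δ (n + 1) = δ n := fun n => by rw [hδ]; simp only [pow_succ]; ring
  have hδ1 : ∀ n, δ n ≤ 1 := fun n => by
    have : (1 / 5 : ℝ) ^ n ≤ 1 := pow_le_one₀ (by norm_num) (by norm_num)
    rw [hδ]; dsimp only; linarith
  have hδlim : Filter.Tendsto δ Filter.atTop (nhds 0) := by
    rw [hδ]
    have := (tendsto_pow_atTop_nhds_zero_of_lt_one (r := (1 / 5 : ℝ))
      (by norm_num) (by norm_num)).const_mul (1 / 2 : ℝ)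
    rwa [mul_zero] at this
  let P : M → ℕ → Prop := fun x n => ENNReal.ofReal (K * lam) * μ (closedBall x (δ n)) <
    ∫⁻ y in closedBall x (δ n), ‖g y‖ₑ ∂μ
  have hP0 : ∀ x, ¬ P x 0 := by
    intro x
    simp only [P, not_lt, hδ0]
    calc ∫⁻ y in closedBall x (1 / 2), ‖g y‖ₑ ∂μ ≤ ∫⁻ y in ball x 1, ‖g y‖ₑ ∂μ :=
          lintegral_mono_set (closedBall_subset_ball (by norm_num))
      _ ≤ ENNReal.ofReal (C * lam) * μ (ball x 1) := hav x
      _ ≤ ENNReal.ofReal (C * lam) * (ENNReal.ofReal D * μ (closedBall x (1 / 2))) := by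
          gcongr
          refine (measure_mono ?_).trans (hdoub x (1 / 2) (by norm_num) (by norm_num))
          exact ball_subset_closedBall.trans (closedBall_subset_closedBall (by norm_num))
      _ ≤ _ := by
          rw [← mul_assoc, ← ENNReal.ofReal_mul (by positivity)]
          refine mul_le_mul_left (ENNReal.ofReal_le_ofReal ?_) _
          rw [hK]; nlinarith
  obtain ⟨Ω, hΩ⟩ : ∃ Ω : Set M, Ω = {x | ∃ n, P x n} := ⟨_, rfl⟩
  have hN : ∀ x ∈ Ω, ∃ n, P x (n + 1) ∧ ¬ P x n := by
    intro x hx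
    rw [hΩ] at hx
    classical
    have h1 := Nat.find_spec hx
    rcases hm : Nat.find hx with _ | m
    · rw [hm] at h1; exact absurd h1 (hP0 x)
    · refine ⟨m, hm ▸ h1, Nat.find_min hx (by omega)⟩
  choose! N hN1 hN2 using hN
  obtain ⟨u, huΩ, hudisj, hucov⟩ :=
    Vitali.exists_disjoint_subfamily_covering_enlargement_closedBall Ω (fun x => x)
      (fun x => δ (N x + 1)) 1 (fun x _ => hδ1 _) 5 (by norm_num)
  have hucount : u.Countable := hudisj.countable_of_nonempty_interior fun x _ =>
    ⟨x, ball_subset_interior_closedBall (mem_ball_self (hδpos _))⟩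
  have : Countable u := hucount.to_subtype
  obtain ⟨e, he⟩ := exists_injective_nat u
  let r : u → ℝ := fun i => δ (N i + 1)
  have hr0 : ∀ i, 0 < r i := fun i => hδpos _
  let B : u → Set M := fun i => closedBall (i : M) (r i)
  let B5 : u → Set M := fun i => closedBall (i : M) (5 * r i)
  let A : u → Set M := fun i => B5 i \ ⋃ j, ⋃ (_ : e j < e i), B5 j
  let U : Set M := ⋃ i, B5 i
  have hBB5 : ∀ i, B i ⊆ B5 i := fun i => closedBall_subset_closedBall (by linarith [hr0 i])
  have hAB5 : ∀ i, A i ⊆ B5 i := fun i => sdiff_subset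
  have hBm : ∀ i, MeasurableSet (B i) := fun i => measurableSet_closedBall
  have hB5m : ∀ i, MeasurableSet (B5 i) := fun i => measurableSet_closedBall
  have hAm : ∀ i, MeasurableSet (A i) := fun i =>
    (hB5m i).diff (MeasurableSet.iUnion fun j => MeasurableSet.iUnion fun _ => hB5m j)
  have hUm : MeasurableSet U := MeasurableSet.iUnion hB5m
  have hΩU : Ω ⊆ U := by
    intro x hx
    obtain ⟨b, hb, hsub⟩ := hucov x hx
    exact mem_iUnion.2 ⟨⟨b, hb⟩, hsub (mem_closedBall_self (hδpos _).le)⟩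
  have hBdisj : Pairwise (Function.onFun Disjoint B) := fun i j hij =>
    hudisj i.2 j.2 (fun h => hij (Subtype.ext h))
  have hAlt : ∀ i j, e i < e j → Disjoint (A i) (A j) := by
    intro i j hij
    refine Set.disjoint_left.2 fun x hx hx' => hx'.2 ?_
    exact mem_iUnion.2 ⟨i, mem_iUnion.2 ⟨hij, hx.1⟩⟩
  have hAdisj : Pairwise (Function.onFun Disjoint A) := by
    intro i j hij
    rcases lt_trichotomy (e i) (e j) with h | h | h
    · exact hAlt i j h
    · exact absurd (he h) hij
    · exact (hAlt j i h).symm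
  have hAU : ∀ x ∈ U, ∃ i, x ∈ A i := by
    classical
    intro x hx
    have hx' : ∃ n, ∃ i, e i = n ∧ x ∈ B5 i := by
      obtain ⟨i, hi⟩ := mem_iUnion.1 hx
      exact ⟨e i, i, rfl, hi⟩
    obtain ⟨i, hi, hxi⟩ := Nat.find_spec hx'
    refine ⟨i, hxi, fun hmem => ?_⟩
    obtain ⟨j, hj⟩ := mem_iUnion.1 hmem
    obtain ⟨hlt, hxj⟩ := mem_iUnion.1 hj
    exact Nat.find_min hx' (hi ▸ hlt) ⟨j, rfl, hxj⟩
  have hBbig : ∀ i, ENNReal.ofReal (K * lam) * μ (B i) ≤ ∫⁻ y in B i, ‖g y‖ₑ ∂μ :=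
    fun i => (hN1 i (huΩ i.2)).le
  have hBne : ∀ i, μ (B i) ≠ 0 := by
    intro i h0
    have h1 := hN1 i (huΩ i.2)
    have h2 : ∫⁻ y in B i, ‖g y‖ₑ ∂μ = 0 := setLIntegral_measure_zero _ _ h0
    exact absurd h1 (by simp only [P]; change ¬ (_ < ∫⁻ y in B i, ‖g y‖ₑ ∂μ); rw [h2]; simp)
  have hB5small : ∀ i, ∫⁻ y in B5 i, ‖g y‖ₑ ∂μ ≤ ENNReal.ofReal (K * D * lam) * μ (B i) := by
    intro i
    have h1 := hN2 i (huΩ i.2)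
    simp only [P, not_lt] at h1
    rw [← hδs] at h1
    refine h1.trans ?_
    have h2 : μ (closedBall (i : M) (5 * r i)) ≤ ENNReal.ofReal D * μ (closedBall (i : M) (r i)) :=
      (measure_mono (closedBall_subset_closedBall (by linarith [hr0 i]))).trans
        (hdoub i (r i) (hr0 i) (hδ1 _))
    calc _ ≤ ENNReal.ofReal (K * lam) * (ENNReal.ofReal D * μ (closedBall (i : M) (r i))) := by
          gcongr
      _ = _ := by
          rw [← mul_assoc, ← ENNReal.ofReal_mul (by positivity)]
          congr 2; ring
  let a : u → ℝ := fun i => (∫ y in A i, g y ∂μ) / μ.real (B i)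
  have hBr : ∀ i, 0 < μ.real (B i) := fun i => ENNReal.toReal_pos (hBne i) (hfin _ _)
  have haB : ∀ i, a i * μ.real (B i) = ∫ y in A i, g y ∂μ := fun i =>
    div_mul_cancel₀ _ (hBr i).ne'
  have haBe : ∀ i, ‖a i‖ₑ * μ (B i) ≤ ∫⁻ y in A i, ‖g y‖ₑ ∂μ := by
    intro i
    have h1 : μ (B i) = ‖μ.real (B i)‖ₑ := by
      rw [Real.enorm_of_nonneg (hBr i).le]; exact (ENNReal.ofReal_toReal (hfin _ _)).symm
    rw [h1, ← enorm_mul, haB]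
    exact enorm_integral_le_lintegral_enorm _
  have ha : ∀ i, |a i| ≤ K * D * lam := by
    intro i
    have h1 : ‖a i‖ₑ * μ (B i) ≤ ENNReal.ofReal (K * D * lam) * μ (B i) :=
      (haBe i).trans ((lintegral_mono_set (hAB5 i)).trans (hB5small i))
    have h2 := (ENNReal.mul_le_mul_iff_left (hBne i) (hfin _ _)).1 h1
    rw [Real.enorm_eq_ofReal_abs] at h2
    exact (ENNReal.ofReal_le_ofReal_iff (by positivity)).1 h2
  have hsumA : ∀ x, HasSum (fun i => (A i).indicator g x) (U.indicator g x) := by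
    intro x
    by_cases hx : x ∈ U
    · obtain ⟨i, hi⟩ := hAU x hx
      have : U.indicator g x = (A i).indicator g x := by
        rw [indicator_of_mem hx, indicator_of_mem hi]
      rw [this]
      refine hasSum_single i fun j hj => indicator_of_notMem (fun hxj => ?_) _
      exact Set.disjoint_left.1 (hAdisj hj) hxj hi
    · rw [indicator_of_notMem hx]
      have : (fun i => (A i).indicator g x) = fun _ => 0 := by
        ext i
        exact indicator_of_notMem (fun h => hx (mem_iUnion.2 ⟨i, hAB5 i h⟩)) _
      rw [this]; exact hasSum_zero
  have hsumB : ∀ x i, x ∈ B i → HasSum (fun j => (B j).indicator (fun _ => a j) x) (a i) := by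
    intro x i hi
    have : a i = (B i).indicator (fun _ => a i) x := by rw [indicator_of_mem hi]
    rw [this]
    refine hasSum_single i fun j hj => indicator_of_notMem (fun hxj => ?_) _
    exact Set.disjoint_left.1 (hBdisj hj) hxj hi
  have hsumB0 : ∀ x, (∀ i, x ∉ B i) → HasSum (fun j => (B j).indicator (fun _ => a j) x) 0 := by
    intro x hx
    have : (fun j => (B j).indicator (fun _ => a j) x) = fun _ => 0 := by
      ext i; exact indicator_of_notMem (hx i) _
    rw [this]; exact hasSum_zero
  have hsumBs : ∀ x, Summable (fun j => (B j).indicator (fun _ => a j) x) := by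
    intro x
    by_cases hx : ∃ i, x ∈ B i
    · exact (hsumB x _ hx.choose_spec).summable
    · push Not at hx
      exact (hsumB0 x hx).summable
  have hiA : ∀ i, Integrable ((A i).indicator g) μ := fun i => hg.indicator (hAm i)
  have hiB : ∀ i, Integrable ((B i).indicator (fun _ => a i)) μ := fun i =>
    (integrable_indicator_iff (hBm i)).2 (integrableOn_const (hfin _ _))
  refine ⟨fun x => Uᶜ.indicator g x + ∑' i, (B i).indicator (fun _ => a i) x,
    CZDec.toNat (ι := u) ⟨fun i x => (A i).indicator g x - (B i).indicator (fun _ => a i) x,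
      B5, r, fun i => i, ?_, hB5m, hr0, ?_, ?_, ?_, ?_, ?_, ?_⟩, ?_⟩
  · exact fun i => (hiA i).sub (hiB i)
  · refine Filter.Eventually.of_forall fun x => ?_
    rw [Summable.tsum_sub (hsumA x).summable (hsumBs x), (hsumA x).tsum_eq]
    have := congrFun (indicator_self_add_compl U g) x
    simp only [Pi.add_apply] at this
    linarith
  · intro i x hx
    beta_reduce
    rw [indicator_of_notMem (fun h => hx (hAB5 i h)), indicator_of_notMem (fun h => hx (hBB5 i h)),
      sub_zero]
  · intro i
    rw [integral_sub (hiA i) (hiB i), integral_indicator (hAm i), integral_indicator (hBm i),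
      setIntegral_const, smul_eq_mul, mul_comm, haB, sub_self]
  · intro i y hy
    have : dist y i ≤ 5 * r i := hy
    change dist y i < 6 * r i
    linarith [hr0 i]
  · have h1 : ∀ i, μ {y | ∃ q ∈ B5 i, dist y q < r i} ≤ ENNReal.ofReal D * μ (B i) := by
      intro i
      refine (measure_mono ?_).trans (hdoub i (r i) (hr0 i) (hδ1 _))
      rintro y ⟨q, hq, hyq⟩
      have : dist q i ≤ 5 * r i := hq
      have h2 := dist_triangle y q i
      change dist y i ≤ 6 * r i
      linarith
    refine (ENNReal.tsum_le_tsum h1).trans ?_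
    rw [ENNReal.tsum_mul_left, ENNReal.le_div_iff_mul_le (by simp [hlam]) (by simp), mul_assoc]
    gcongr
    · nlinarith
    · rw [mul_comm, ← ENNReal.tsum_mul_left]
      calc _ ≤ ∑' i, ∫⁻ y in B i, ‖g y‖ₑ ∂μ := by
            refine ENNReal.tsum_le_tsum fun i => le_trans ?_ (hBbig i)
            gcongr; nlinarith
        _ = ∫⁻ y in ⋃ i, B i, ‖g y‖ₑ ∂μ := (lintegral_iUnion hBm hBdisj _).symm
        _ ≤ _ := setLIntegral_le_lintegral _ _
  · have h1 : ∀ i, ∫⁻ x, ‖(A i).indicator g x - (B i).indicator (fun _ => a i) x‖ₑ ∂μ ≤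
        2 * ∫⁻ y in A i, ‖g y‖ₑ ∂μ := by
      intro i
      calc _ ≤ ∫⁻ x, ‖(A i).indicator g x‖ₑ + ‖(B i).indicator (fun _ => a i) x‖ₑ ∂μ :=
            lintegral_mono fun x => enorm_sub_le
        _ = ∫⁻ x, ‖(A i).indicator g x‖ₑ ∂μ + ∫⁻ x, ‖(B i).indicator (fun _ => a i) x‖ₑ ∂μ :=
            lintegral_add_left' (hiA i).1.enorm _
        _ = ∫⁻ y in A i, ‖g y‖ₑ ∂μ + ‖a i‖ₑ * μ (B i) := by
            simp only [enorm_indicator_eq_indicator_enorm]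
            rw [lintegral_indicator (hAm i), lintegral_indicator (hBm i), setLIntegral_const]
        _ ≤ _ := by rw [two_mul]; gcongr; exact haBe i
    refine (ENNReal.tsum_le_tsum h1).trans ?_
    rw [ENNReal.tsum_mul_left]
    gcongr
    rw [← lintegral_iUnion hAm hAdisj]
    exact setLIntegral_le_lintegral _ _
  · filter_upwards [ae_le_of_balls hballs hloc hg δ hδpos hδlim (K * lam) (by positivity)] with x hx
    by_cases hxU : x ∈ U
    · rw [indicator_of_notMem (by simpa using hxU), zero_add]
      by_cases hxB : ∃ i, x ∈ B i
      · obtain ⟨i, hi⟩ := hxB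
        rw [(hsumB x i hi).tsum_eq]; exact ha i
      · push Not at hxB
        rw [(hsumB0 x hxB).tsum_eq, abs_zero]; positivity
    · rw [indicator_of_mem hxU, (hsumB0 x fun i hi => hxU (mem_iUnion.2 ⟨i, hBB5 i hi⟩)).tsum_eq,
        add_zero]
      have hxΩ : x ∉ Ω := fun h => hxU (hΩU h)
      have h2 := hx fun n => by
        by_contra hcon
        exact hxΩ (hΩ ▸ ⟨n, not_le.1 hcon⟩)
      refine h2.trans ?_
      have : K * lam * 1 ≤ K * lam * D := by gcongr
      linarith

lemma coarse_cz {M : Type*} [MetricSpace M] [TopologicalSpace.SeparableSpace M]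
    [MeasurableSpace M] [BorelSpace M] [Nonempty M] {μ : Measure M}
    (hloc : ∀ R : ℝ, 0 < R → ∃ CR : ℝ, 0 < CR ∧ ∀ (x : M) (r : ℝ), 0 < r → r ≤ R →
      μ (Metric.ball x (2 * r)) ≤ ENNReal.ofReal CR * μ (Metric.ball x r))
    (C : ℝ) (hC : 0 < C) :
    ∃ D : ℝ, 0 < D ∧ ∀ (f g : M → ℝ) (lam : ℝ) (S T : ℝ≥0∞), 0 < lam → T ≠ ⊤ →
      CZDec ℕ μ 0 C f g S T → (∀ᵐ x ∂μ, |g x| ≤ C * lam) →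
      ∃ h : M → ℝ, CZDec ℕ μ (1 / 2) D f h (S + ENNReal.ofReal D * T / ENNReal.ofReal lam)
        (T + T) ∧ ∀ x, ∫⁻ y in ball x 1, ‖h y‖ₑ ∂μ ≤ ENNReal.ofReal (D * lam) * μ (ball x 1) := by
  classical
  obtain ⟨R0, hR0⟩ : ∃ R0, R0 = C / 2 + 5 / 2 := ⟨_, rfl⟩
  have hR0p : 0 < R0 := by rw [hR0]; positivity
  obtain ⟨E, hE, hdoub⟩ := doubling_closedBalls hloc 1 one_pos (2 * (R0 + 2))
  replace hdoub : ∀ x, μ (closedBall x (R0 + 2)) ≤ ENNReal.ofReal E * μ (closedBall x (1 / 2)) := by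
    intro x
    have := hdoub x (1 / 2) (by norm_num) (by norm_num)
    rwa [show 2 * (R0 + 2) * (1 / 2) = R0 + 2 by ring] at this
  obtain ⟨u, -, hudisj, hucov⟩ :=
    Vitali.exists_disjoint_subfamily_covering_enlargement_closedBall (univ : Set M) (fun x => x)
      (fun _ => 1 / 2) 1 (fun x _ => by norm_num) 5 (by norm_num)
  have hucount : u.Countable := hudisj.countable_of_nonempty_interior fun x _ =>
    ⟨x, ball_subset_interior_closedBall (mem_ball_self (by norm_num))⟩
  have : Countable u := hucount.to_subtype
  have hj : ∀ y : M, ∃ n : u, dist y n ≤ 5 / 2 := by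
    intro y
    obtain ⟨b, hb, hsub⟩ := hucov y (mem_univ _)
    refine ⟨⟨b, hb⟩, ?_⟩
    have := mem_closedBall.1 (hsub (mem_closedBall_self (by norm_num)))
    linarith
  choose j hj using hj
  refine ⟨C + R0 + E, by positivity, fun f g lam S T hlam hT hdec hgb => ?_⟩
  obtain ⟨fs, Q, r, c, h1, h2, h3, h4, h5, h6, h7, h8, h9⟩ := hdec
  let s : ℕ → M → ℝ := fun i => if r i ≤ 1 / 2 then fs i else 0
  let b : ℕ → M → ℝ := fun i => if r i ≤ 1 / 2 then 0 else fs i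
  have hsi : ∀ i, Integrable (s i) μ := by
    intro i; simp only [s]; split_ifs
    exacts [h1 i, integrable_zero _ _ _]
  have hbi : ∀ i, Integrable (b i) μ := by
    intro i; simp only [b]; split_ifs
    exacts [integrable_zero _ _ _, h1 i]
  have hsle : ∀ i x, ‖s i x‖ₑ ≤ ‖fs i x‖ₑ := by
    intro i x; simp only [s]; split_ifs <;> simp
  have hble : ∀ i x, ‖b i x‖ₑ ≤ ‖fs i x‖ₑ := by
    intro i x; simp only [b]; split_ifs <;> simp
  have hsT : ∑' i, ∫⁻ x, ‖s i x‖ₑ ∂μ ≤ T :=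
    (ENNReal.tsum_le_tsum fun i => lintegral_mono (hsle i)).trans h9
  have hbT : ∑' i, ∫⁻ x, ‖b i x‖ₑ ∂μ ≤ T :=
    (ENNReal.tsum_le_tsum fun i => lintegral_mono (hble i)).trans h9
  have hs0 : ∀ i, ∫ x, s i x ∂μ = 0 := by
    intro i; simp only [s]; split_ifs
    exacts [h6 i, by simp]
  have hssum := ae_summable_of_lintegral hsi (ne_top_of_le_ne_top hT hsT)
  have hbsum := ae_summable_of_lintegral hbi (ne_top_of_le_ne_top hT hbT)
  have step1 : CZDec ℕ μ (1 / 2) C f (fun x => ∑' i, s i x + g x) S T := by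
    refine ⟨b, fun i => if r i ≤ 1 / 2 then ∅ else Q i, fun i => if r i ≤ 1 / 2 then 1 else r i,
      c, hbi, ?_, ?_, ?_, ?_, ?_, ?_, ?_, hbT⟩
    · intro i; dsimp only; split_ifs
      exacts [MeasurableSet.empty, h2 i]
    · intro i; dsimp only; split_ifs with h
      exacts [by norm_num, not_le.1 h]
    · filter_upwards [h4, hssum, hbsum] with x hx hs hb
      rw [hx, ← add_assoc, ← hb.tsum_add hs]
      congr 2
      ext i
      simp only [s, b]; split_ifs <;> simp
    · intro i x hx
      simp only [b]
      by_cases h : r i ≤ 1 / 2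
      · rw [if_pos h]; rfl
      · beta_reduce at hx; rw [if_neg h] at hx ⊢; exact h5 i x hx
    · intro i; simp only [b]; split_ifs
      exacts [by simp, h6 i]
    · intro i
      by_cases h : r i ≤ 1 / 2
      · simp only [h, if_true]; simp
      · simp only [h, if_false]; exact h7 i
    · refine (ENNReal.tsum_le_tsum fun i => ?_).trans h8
      by_cases h : r i ≤ 1 / 2
      · simp only [h, if_true]; simp
      · simp only [h, if_false]; exact le_rfl
  let φ : ℕ → u := fun i => j (c i)
  let F : u → M → ℝ := fun n x => ∑' i : φ ⁻¹' {n}, s i x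
  let w : u → ℝ≥0∞ := fun n => ∑' i : φ ⁻¹' {n}, ∫⁻ x, ‖s i x‖ₑ ∂μ
  have hwT : ∑' n, w n ≤ T := by
    refine le_trans (le_of_eq ?_) hsT
    exact ENNReal.tsum_fiberwise (fun i => ∫⁻ x, ‖s i x‖ₑ ∂μ) φ
  have hwne : ∀ n, w n ≠ ⊤ := fun n =>
    ne_top_of_le_ne_top hT ((ENNReal.le_tsum n).trans hwT)
  have hFi : ∀ n, Integrable (F n) μ := fun n =>
    integrable_tsum_of_lintegral (fun i : φ ⁻¹' {n} => hsi i) (hwne n)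
  have hFw : ∀ n, ∫⁻ x, ‖F n x‖ₑ ∂μ ≤ w n := fun n =>
    lintegral_enorm_tsum_le (fun i : φ ⁻¹' {n} => (hsi i).1)
  have hF0 : ∀ n, ∫ x, F n x ∂μ = 0 := by
    intro n
    have := integral_tsum (fun i : φ ⁻¹' {n} => (hsi i).1) (hwne n)
    simp only [F]
    rw [this]
    simp [hs0]
  have hFsupp : ∀ (n : u) x, x ∉ ball (n : M) R0 → F n x = 0 := by
    intro n x hx
    simp only [F]
    have : ∀ i : φ ⁻¹' {n}, s i x = 0 := by
      rintro ⟨i, hi⟩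
      simp only [s]
      by_cases h : r i ≤ 1 / 2
      · rw [if_pos h]
        refine h5 i x fun hxQ => hx ?_
        have e1 : dist x (c i) < C * r i := h7 i hxQ
        have e2 : dist (c i) (j (c i)) ≤ 5 / 2 := hj (c i)
        have e3 : j (c i) = n := hi
        rw [e3] at e2
        have e4 := dist_triangle x (c i) n
        have e5 : C * r i ≤ C * (1 / 2) := by gcongr
        rw [mem_ball, hR0]
        linarith
      · rw [if_neg h]; rfl
    simp [this]
  let bad : u → Prop := fun n => ENNReal.ofReal lam * μ (closedBall (n : M) (1 / 2)) < w n
  let P : u → M → ℝ := fun n => if bad n then F n else 0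
  let G : u → M → ℝ := fun n => if bad n then 0 else F n
  have hPi : ∀ n, Integrable (P n) μ := by
    intro i; simp only [P]; split_ifs
    exacts [hFi i, integrable_zero _ _ _]
  have hGi : ∀ n, Integrable (G n) μ := by
    intro i; simp only [G]; split_ifs
    exacts [integrable_zero _ _ _, hFi i]
  have hPw : ∀ n, ∫⁻ x, ‖P n x‖ₑ ∂μ ≤ w n := by
    intro i; simp only [P]; split_ifs
    exacts [hFw i, by simp]
  have hGw : ∀ n, ∫⁻ x, ‖G n x‖ₑ ∂μ ≤ w n := by
    intro i; simp only [G]; split_ifs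
    exacts [by simp, hFw i]
  have hPT := (ENNReal.tsum_le_tsum hPw).trans hwT
  have hGT := (ENNReal.tsum_le_tsum hGw).trans hwT
  have hPsum := ae_summable_of_lintegral hPi (ne_top_of_le_ne_top hT hPT)
  have hGsum := ae_summable_of_lintegral hGi (ne_top_of_le_ne_top hT hGT)
  have step2 : CZDec u μ (1 / 2) R0 (fun x => ∑' i, s i x + g x) (fun x => g x + ∑' n, G n x)
      (ENNReal.ofReal E * T / ENNReal.ofReal lam) T := by
    refine ⟨P, fun n => if bad n then ball (n : M) R0 else ∅, fun n => 1,
      fun n => n, hPi, ?_, ?_, ?_, ?_, ?_, ?_, ?_, hPT⟩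
    · intro i; dsimp only; split_ifs
      exacts [measurableSet_ball, MeasurableSet.empty]
    · intro i; norm_num
    · filter_upwards [hssum, hPsum, hGsum] with x hs hP hG
      have e1 : ∑' i, s i x = ∑' n, F n x := (hs.hasSum.tsum_fiberwise φ).tsum_eq.symm
      have e2 : ∑' n, F n x = ∑' n, P n x + ∑' n, G n x := by
        rw [← hP.tsum_add hG]
        congr 1
        ext i
        simp only [P, G]; split_ifs <;> simp
      rw [e1, e2]; ring
    · intro i x hx
      simp only [P]
      by_cases h : bad i
      · beta_reduce at hx; rw [if_pos h] at hx ⊢; exact hFsupp i x hx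
      · rw [if_neg h]; rfl
    · intro i; simp only [P]; split_ifs
      exacts [hF0 i, by simp]
    · intro i
      by_cases h : bad i
      · simp only [h, if_true]
        intro y hy
        simpa using hy
      · simp [h]
    · have e1 : ∀ n, μ {y | ∃ q ∈ (if bad n then ball (n : M) R0 else ∅), dist y q < 1} ≤
          ENNReal.ofReal E * (w n / ENNReal.ofReal lam) := by
        intro n
        by_cases h : bad n
        · simp only [h, if_true]
          refine (measure_mono (t := closedBall (n : M) (R0 + 2)) ?_).trans ((hdoub n).trans ?_)
          · rintro y ⟨q, hq, hyq⟩
            have := dist_triangle y q n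
            rw [mem_ball] at hq
            rw [mem_closedBall]
            linarith
          · gcongr
            rw [ENNReal.le_div_iff_mul_le (by simp [hlam]) (by simp), mul_comm]
            exact h.le
        · simp [h]
      refine (ENNReal.tsum_le_tsum e1).trans ?_
      simp only [div_eq_mul_inv]
      rw [ENNReal.tsum_mul_left, ENNReal.tsum_mul_right, mul_assoc]
      gcongr
  refine ⟨fun x => g x + ∑' n, G n x, (step1.trans step2 hT hT (ρ := 1 / 2) (C := C + R0 + E)
    (S := S + ENNReal.ofReal (C + R0 + E) * T / ENNReal.ofReal lam) (T := T + T)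
    (by norm_num) le_rfl le_rfl (by linarith) (by linarith) ?_ le_rfl).toNat, ?_⟩
  · gcongr
    linarith
  · intro x
    have e1 : ∀ n, ∫⁻ y in ball x 1, ‖G n y‖ₑ ∂μ ≤
        ENNReal.ofReal lam * μ (closedBall (n : M) (1 / 2) ∩ closedBall x (R0 + 2)) := by
      intro n
      by_cases h : bad n
      · simp [G, h]
      by_cases hn : dist (n : M) x < R0 + 1
      · have : closedBall (n : M) (1 / 2) ∩ closedBall x (R0 + 2) = closedBall (n : M) (1 / 2) := by
          refine inter_eq_left.2 (closedBall_subset_closedBall' (by linarith))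
        rw [this]
        refine (setLIntegral_le_lintegral _ _).trans ((hGw n).trans (not_lt.1 h))
      · have : ∫⁻ y in ball x 1, ‖G n y‖ₑ ∂μ = 0 := by
          rw [setLIntegral_congr_fun (g := fun _ => 0) measurableSet_ball]
          · simp
          · intro y hy
            simp only [G, if_neg h]
            rw [hFsupp n y, enorm_zero]
            intro hyn
            rw [mem_ball] at hy hyn
            have := dist_triangle_left (n : M) x y
            linarith
        rw [this]; exact zero_le
    have e2 : ∑' n : u, μ (closedBall (n : M) (1 / 2) ∩ closedBall x (R0 + 2)) ≤
        ENNReal.ofReal E * μ (ball x 1) := by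
      rw [← measure_iUnion]
      · refine (measure_mono (iUnion_subset fun n => inter_subset_right)).trans ((hdoub x).trans ?_)
        gcongr
        exact closedBall_subset_ball (by norm_num)
      · intro m n hmn
        exact (hudisj m.2 n.2 (fun h => hmn (Subtype.ext h))).mono inter_subset_left
          inter_subset_left
      · exact fun n => measurableSet_closedBall.inter measurableSet_closedBall
    calc ∫⁻ y in ball x 1, ‖g y + ∑' n, G n y‖ₑ ∂μ
        ≤ ∫⁻ y in ball x 1, ‖g y‖ₑ + ‖∑' n, G n y‖ₑ ∂μ := lintegral_mono fun y => enorm_add_le _ _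
      _ = ∫⁻ y in ball x 1, ‖g y‖ₑ ∂μ + ∫⁻ y in ball x 1, ‖∑' n, G n y‖ₑ ∂μ :=
          lintegral_add_right' _
            (AEStronglyMeasurable.tsum fun n => (hGi n).1.restrict).enorm
      _ ≤ ENNReal.ofReal (C * lam) * μ (ball x 1) +
          ENNReal.ofReal lam * (ENNReal.ofReal E * μ (ball x 1)) := by
          gcongr
          · rw [← setLIntegral_const]
            refine lintegral_mono_ae (ae_restrict_of_ae ?_)
            filter_upwards [hgb] with y hy
            rw [Real.enorm_eq_ofReal_abs]
            exact ENNReal.ofReal_le_ofReal hy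
          · refine (lintegral_enorm_tsum_le fun n => (hGi n).1.restrict).trans ?_
            refine (ENNReal.tsum_le_tsum e1).trans ?_
            rw [ENNReal.tsum_mul_left]
            gcongr
      _ ≤ _ := by
          rw [← mul_assoc, ← ENNReal.ofReal_mul hlam.le, ← add_mul,
            ← ENNReal.ofReal_add (by positivity) (by positivity)]
          refine mul_le_mul_left (ENNReal.ofReal_le_ofReal ?_) _
          nlinarith

/-- For a separable metric measure space with finite measure on balls satisfying the
local doubling property, the Calderón–Zygmund property is equivalent to the
Calderón–Zygmund property on large scales. -/
theorem czProperty_iff_czProperty_largeScale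
    {M : Type*} [MetricSpace M] [TopologicalSpace.SeparableSpace M]
    [MeasurableSpace M] [BorelSpace M] (μ : Measure M)
    (hballs : ∀ (x : M) (r : ℝ), μ (Metric.ball x r) < ⊤)
    (hloc : ∀ R : ℝ, 0 < R → ∃ CR : ℝ, 0 < CR ∧ ∀ (x : M) (r : ℝ), 0 < r → r ≤ R →
      μ (Metric.ball x (2 * r)) ≤ ENNReal.ofReal CR * μ (Metric.ball x r)) :
    HasCZProperty dist μ ↔ HasCZPropertyLargeScale dist μ := by
  rcases isEmpty_or_nonempty M with hM | hM
  · have h0 : μ Set.univ = 0 := by rw [Set.univ_eq_empty_iff.2 hM, measure_empty]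
    refine ⟨fun _ => ⟨1, one_pos, fun f _ lam _ h => ?_⟩, fun _ => ⟨1, one_pos, fun f _ lam _ h => ?_⟩⟩
    · rw [h0, mul_zero] at h; exact absurd h not_lt_zero
    · rw [h0, mul_zero] at h; exact absurd h not_lt_zero
  constructor
  · rintro ⟨C, hC, H⟩
    obtain ⟨D, hD, HD⟩ := coarse_cz hloc C hC
    have hC' : 0 < 3 * C + D + D * C := by positivity
    refine ⟨3 * C + D + D * C, hC', fun f hf lam hlam hl => ?_⟩
    have hN : 0 ≤ ∫ x, |f x| ∂μ := integral_nonneg fun x => abs_nonneg _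
    have hDC : 0 < D * C := by positivity
    obtain ⟨fs, g, Q, r, c, h1, h2, h3, h4, h5, h6, h7, h8, h9, h10⟩ := H f hf lam hlam
      (lt_of_le_of_lt (ENNReal.ofReal_le_ofReal
        (mul_le_mul_of_nonneg_right (by linarith) hN)) hl)
    rw [tsum_congr fun i => ofReal_integral_abs_eq (h1 i)] at h9
    obtain ⟨h, hdec, hav⟩ := HD f g lam _ _ hlam ENNReal.ofReal_ne_top
      ⟨fs, Q, r, c, h1, h2, h3, h4, h5, h6, h7, h8, h9⟩ h10
    obtain ⟨fs', Q', r', c', h1', h2', h3', h4', h5', h6', h7', h8', h9'⟩ := hdec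
    refine ⟨fs', h, Q', r', c', h1', h2', h3', h4', h5', h6', ?_, ?_, ?_, ?_⟩
    · intro i y hy
      have hy' : dist y (c' i) < D * r' i := h7' i hy
      refine lt_of_lt_of_le hy' (mul_le_mul_of_nonneg_right ?_ ?_)
      · linarith
      · linarith [h3' i]
    · refine h8'.trans ?_
      rw [← ENNReal.ofReal_mul hD.le, ← ENNReal.ofReal_div_of_pos hlam,
        ← ENNReal.ofReal_add (by positivity) (by positivity)]
      refine ENNReal.ofReal_le_ofReal ?_
      rw [← add_div]
      gcongr
      nlinarith
    · rw [tsum_congr fun i => ofReal_integral_abs_eq (h1' i)]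
      refine h9'.trans ?_
      rw [← ENNReal.ofReal_add (by positivity) (by positivity)]
      refine ENNReal.ofReal_le_ofReal ?_
      nlinarith
    · intro x
      have := hav x
      simp only [Real.enorm_eq_ofReal_abs] at this
      refine this.trans (mul_le_mul_left (ENNReal.ofReal_le_ofReal ?_) _)
      gcongr
      linarith
  · rintro ⟨C, hC, H⟩
    obtain ⟨D, hD, HD⟩ := local_cz hballs hloc C hC
    have hC' : 0 < 3 * C + 2 + 6 + D + D * C := by positivity
    refine ⟨3 * C + 2 + 6 + D + D * C, hC', fun f hf lam hlam hl => ?_⟩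
    have hN : 0 ≤ ∫ x, |f x| ∂μ := integral_nonneg fun x => abs_nonneg _
    have hDC : 0 < D * C := by positivity
    obtain ⟨fs, g, Q, r, c, h1, h2, h3, h4, h5, h6, h7, h8, h9, h10⟩ := H f hf lam hlam
      (lt_of_le_of_lt (ENNReal.ofReal_le_ofReal
        (mul_le_mul_of_nonneg_right (by linarith) hN)) hl)
    rw [tsum_congr fun i => ofReal_integral_abs_eq (h1 i)] at h9
    have dec1 : CZDec ℕ μ (1 / 2) C f g _ _ :=
      ⟨fs, Q, r, c, h1, h2, h3, h4, h5, h6, h7, h8, h9⟩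
    obtain ⟨hg, hgn⟩ := dec1.integrable ENNReal.ofReal_ne_top hf
    rw [← ofReal_integral_abs_eq hf, ← ENNReal.ofReal_add (by positivity) (by positivity)] at hgn
    obtain ⟨h, dec2, hb⟩ := HD g hg lam hlam fun x => by
      simp only [Real.enorm_eq_ofReal_abs]; exact h10 x
    have hT2 : 2 * ∫⁻ x, ‖g x‖ₑ ∂μ ≠ ⊤ :=
      ENNReal.mul_ne_top (by simp) (ne_top_of_le_ne_top ENNReal.ofReal_ne_top hgn)
    have dec3 := (dec1.trans dec2 ENNReal.ofReal_ne_top hT2 (ρ := 0)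
      (C := 3 * C + 2 + 6 + D + D * C) le_rfl (by norm_num) le_rfl (by linarith) (by linarith)
      (S := ENNReal.ofReal ((3 * C + 2 + 6 + D + D * C) * (∫ x, |f x| ∂μ) / lam))
      (T := ENNReal.ofReal ((3 * C + 2 + 6 + D + D * C) * (∫ x, |f x| ∂μ))) ?_ ?_).toNat
    · obtain ⟨fs', Q', r', c', h1', h2', h3', h4', h5', h6', h7', h8', h9'⟩ := dec3
      rw [← tsum_congr fun i => ofReal_integral_abs_eq (h1' i)] at h9'
      refine ⟨fs', h, Q', r', c', h1', h2', h3', h4', h5', h6', h7', h8', h9', ?_⟩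
      filter_upwards [hb] with x hx
      refine hx.trans ?_
      gcongr
      linarith
    · calc _ ≤ ENNReal.ofReal (C * (∫ x, |f x| ∂μ) / lam) + ENNReal.ofReal D *
            ENNReal.ofReal ((∫ x, |f x| ∂μ) + C * ∫ x, |f x| ∂μ) / ENNReal.ofReal lam := by
            gcongr
        _ ≤ _ := by
            rw [← ENNReal.ofReal_mul hD.le, ← ENNReal.ofReal_div_of_pos hlam,
              ← ENNReal.ofReal_add (by positivity) (by positivity)]
            refine ENNReal.ofReal_le_ofReal ?_
            rw [← add_div]
            gcongr
            nlinarith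
    · calc _ ≤ ENNReal.ofReal (C * (∫ x, |f x| ∂μ)) + ENNReal.ofReal 2 *
            ENNReal.ofReal ((∫ x, |f x| ∂μ) + C * ∫ x, |f x| ∂μ) := by
            rw [ENNReal.ofReal_ofNat]
            gcongr
        _ ≤ _ := by
            rw [← ENNReal.ofReal_mul (by norm_num),
              ← ENNReal.ofReal_add (by positivity) (by positivity)]
            refine ENNReal.ofReal_le_ofReal ?_
            nlinarith

end
end

section
/- Let M be a group equipped with a right-invariant metric d and a left-invariant Borel measure μ in which every ball has finite measure, and assume μ(M) = ∞. If (M,d,μ) satisfies the Calderón–Zygmund property, then M contains r-doubling sets for arbitrarily large r: for every r₀ > 0 there exist r > r₀ and a measurable set A with 0 < μ(A) < ∞ such that μ(B(e,r)·A) ≤ 2 μ(A). -/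
open MeasureTheory Metric Set
open scoped Pointwise

noncomputable section

lemma cz_pig (R : ℕ → ℝ) (hR : Monotone R) (x a : ℝ) (ha : 0 ≤ a) (N : ℕ) :
    ∑ j ∈ Finset.range N, (if R j ≤ x ∧ x < R (j+1) then a else 0) ≤ if x < R N then a else 0 := by
  induction N with
  | zero => simp only [Finset.range_zero, Finset.sum_empty]; split_ifs <;> simp [ha]
  | succ n ih =>
    rw [Finset.sum_range_succ]
    have := hR (Nat.le_succ n)
    simp only [Nat.succ_eq_add_one] at this
    by_cases h1 : x < R n
    · have h2 : x < R (n+1) := lt_of_lt_of_le h1 this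
      simp only [h1, if_true] at ih
      simp only [h2, not_le.mpr h1, false_and, if_false, if_true]
      linarith
    · simp only [h1, if_false] at ih
      have h1' := not_lt.mp h1
      simp only [h1', true_and]
      linarith

lemma cz_iter {M : Type*} [MetricSpace M] [MeasurableSpace M] [BorelSpace M]
    (μ : Measure M) (s : ℝ)
    (h : ∀ A : Set M, MeasurableSet A → 2 * μ A ≤ μ (thickening s A)) (D : ℝ) (A : Set M) (k : ℕ) :
    2 ^ k * μ (thickening D A) ≤ μ (thickening (k * s + D) A) := by
  induction k with
  | zero => simp
  | succ k ih =>
    calc 2 ^ (k+1) * μ (thickening D A) = 2 * (2 ^ k * μ (thickening D A)) := by ring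
      _ ≤ 2 * μ (thickening (k * s + D) A) := by gcongr
      _ ≤ μ (thickening s (thickening (k * s + D) A)) := h _ isOpen_thickening.measurableSet
      _ ≤ μ (thickening ((k+1 : ℕ) * s + D) A) := by
        apply measure_mono
        refine (thickening_thickening_subset _ _ _).trans (thickening_mono ?_ _)
        push_cast; linarith

lemma cz_pigeon (a r : ℕ → ℝ) (ha : ∀ i, 0 ≤ a i) (hs : Summable a) (R : ℕ → ℝ) (hR : Monotone R)
    (N : ℕ) (hN : 0 < N) :
    ∃ j, j < N ∧ (∑' i, if R j ≤ r i ∧ r i < R (j+1) then a i else 0) ≤ (∑' i, a i) / N := by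
  have hsum : ∀ j, Summable (fun i => if R j ≤ r i ∧ r i < R (j+1) then a i else 0) := by
    intro j
    refine Summable.of_nonneg_of_le ?_ ?_ hs
    · intro i; split_ifs <;> simp [ha i]
    · intro i; split_ifs <;> simp [ha i]
  by_contra! hcon
  have h1 : ∑ j ∈ Finset.range N, (∑' i, a i) / N
      < ∑ j ∈ Finset.range N, (∑' i, if R j ≤ r i ∧ r i < R (j+1) then a i else 0) := by
    apply Finset.sum_lt_sum_of_nonempty
    · simpa using hN.ne'
    · intro j hj; exact hcon j (Finset.mem_range.mp hj)
  rw [← Summable.tsum_finsetSum (fun j _ => hsum j)] at h1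
  have h2 : ∑' i, ∑ j ∈ Finset.range N, (if R j ≤ r i ∧ r i < R (j+1) then a i else 0)
      ≤ ∑' i, a i := by
    refine Summable.tsum_le_tsum ?_ (summable_sum (fun j _ => hsum j)) hs
    intro i
    refine (cz_pig R hR (r i) (a i) (ha i) N).trans ?_
    split_ifs <;> simp [ha i]
  have h3 : ∑ j ∈ Finset.range N, (∑' i, a i) / (N:ℝ) = ∑' i, a i := by
    have : (N:ℝ) ≠ 0 := by positivity
    simp; field_simp
  linarith

/-- The transport estimate. -/
lemma cz_core {M : Type*} [MetricSpace M] [MeasurableSpace M] [BorelSpace M]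
    (μ : Measure M) (f : M → ℝ) (hf : Integrable f μ) (C lam : ℝ) (hC : 0 < C) (hlam : 0 < lam)
    (fs : ℕ → M → ℝ) (g : M → ℝ) (Q : ℕ → Set M) (r : ℕ → ℝ) (c : ℕ → M)
    (h1 : ∀ i, Integrable (fs i) μ)
    (hfg : ∀ᵐ x ∂μ, f x = (∑' i, fs i x) + g x)
    (hQ0 : ∀ i, ∀ x, x ∉ Q i → fs i x = 0)
    (hz : ∀ i, ∫ x, fs i x ∂μ = 0)
    (hQc : ∀ i, Q i ⊆ {y | dist y (c i) < C * r i})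
    (hsum : Summable (fun i => ∫ x, |fs i x| ∂μ))
    (hg : ∀ᵐ x ∂μ, |g x| ≤ C * lam)
    (B : Set M) (hBne : B.Nonempty) (hfB : ∀ x, x ∉ B → f x = 0)
    (R R' D : ℝ) (hD : 0 < D) (hR : 0 < R)
    (E : Set M) (hE : E = B ∪ ⋃ i ∈ {i | R' ≤ r i}, Q i)
    (hT : μ (thickening D E) ≠ ⊤) :
    ∫ x, f x ∂μ - C * R / D * (∑' i, ∫ x, |fs i x| ∂μ)
      - (∑' i, if R ≤ r i ∧ r i < R' then ∫ x, |fs i x| ∂μ else 0)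
      ≤ C * lam * (μ (thickening D E)).toReal := by
  have hEne : E.Nonempty := by rw [hE]; exact hBne.mono subset_union_left
  set φ : M → ℝ := fun x => max 0 (1 - infDist x E / D) with hφ
  have hφc : Continuous φ := by
    have := continuous_infDist_pt E
    fun_prop
  have hφ0 : ∀ x, 0 ≤ φ x := fun x => le_max_left _ _
  have hφ1 : ∀ x, φ x ≤ 1 := fun x => by
    have : 0 ≤ infDist x E / D := div_nonneg infDist_nonneg hD.le
    simp only [hφ, max_le_iff]; constructor <;> linarith
  have hφE : ∀ x ∈ E, φ x = 1 := fun x hx => by simp [hφ, infDist_zero_of_mem hx]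
  have hφT : ∀ x, x ∉ thickening D E → φ x = 0 := fun x hx => by
    rw [mem_thickening_iff_infDist_lt hEne, not_lt] at hx
    have : 1 ≤ infDist x E / D := by rwa [le_div_iff₀ hD, one_mul]
    simp only [hφ]; exact max_eq_left (by linarith)
  have hφL : ∀ x y, |φ x - φ y| ≤ dist x y / D := fun x y => by
    have e1 : infDist x E ≤ infDist y E + dist x y := infDist_le_infDist_add_dist
    have e2 : infDist y E ≤ infDist x E + dist y x := infDist_le_infDist_add_dist
    rw [dist_comm y x] at e2
    have k := abs_max_sub_max_le_abs (1 - infDist x E / D) (1 - infDist y E / D) 0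
    rw [max_comm, max_comm _ (0:ℝ)] at k
    refine k.trans ?_
    have : 1 - infDist x E / D - (1 - infDist y E / D) = (infDist y E - infDist x E) / D := by ring
    rw [this, abs_div, abs_of_pos hD]
    gcongr
    rw [abs_le]; constructor <;> linarith
  have hmulint : ∀ u : M → ℝ, Integrable u μ → Integrable (fun x => u x * φ x) μ := by
    intro u hu
    refine Integrable.mono hu (hu.1.mul hφc.measurable.aestronglyMeasurable) ?_
    filter_upwards with x
    rw [norm_mul, Real.norm_of_nonneg (hφ0 x)]
    exact mul_le_of_le_one_right (norm_nonneg _) (hφ1 x)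
  have habs : ∀ u : M → ℝ, Integrable u μ → ∫ x, |u x * φ x| ∂μ ≤ ∫ x, |u x| ∂μ := by
    intro u hu
    refine integral_mono (hmulint u hu).abs hu.abs ?_
    intro x
    simp only [abs_mul, abs_of_nonneg (hφ0 x)]
    exact mul_le_of_le_one_right (abs_nonneg _) (hφ1 x)
  have hFint := fun i => hmulint _ (h1 i)
  have hFsum : Summable (fun i => ∫ x, ‖fs i x * φ x‖ ∂μ) :=
    Summable.of_nonneg_of_le (fun i => integral_nonneg (fun x => norm_nonneg _))
      (fun i => habs _ (h1 i)) hsum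
  have hHS := hasSum_integral_of_summable_integral_norm hFint hFsum
  have hgeq : (fun x => g x * φ x) =ᵐ[μ] fun x => f x * φ x - ∑' i, fs i x * φ x := by
    filter_upwards [hfg] with x hx
    rw [tsum_mul_right, hx]; ring
  have hSm : AEMeasurable (fun x => ∑' i, fs i x * φ x) μ :=
    AEMeasurable.tsum (fun i => (hFint i).aemeasurable)
  have hgm : AEStronglyMeasurable (fun x => g x * φ x) μ :=
    (((hmulint f hf).aemeasurable.sub hSm).congr hgeq.symm).aestronglyMeasurable
  have hTm : MeasurableSet (thickening D E) := isOpen_thickening.measurableSet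
  have hInd : Integrable ((thickening D E).indicator (fun _ => C * lam)) μ :=
    (integrable_indicator_iff hTm).mpr (integrableOn_const hT)
  have hbd : ∀ᵐ x ∂μ, |g x * φ x| ≤ (thickening D E).indicator (fun _ => C * lam) x := by
    filter_upwards [hg] with x hx
    by_cases hxT : x ∈ thickening D E
    · rw [indicator_of_mem hxT, abs_mul, abs_of_nonneg (hφ0 x)]
      exact (mul_le_of_le_one_right (abs_nonneg _) (hφ1 x)).trans hx
    · rw [indicator_of_notMem hxT, hφT x hxT]; simp
  have hgint : Integrable (fun x => g x * φ x) μ := by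
    refine Integrable.mono' hInd hgm hbd
  have hSint : Integrable (fun x => ∑' i, fs i x * φ x) μ := by
    refine ((hmulint f hf).sub hgint).congr ?_
    filter_upwards [hgeq] with x hx
    simp only [Pi.sub_apply, hx]; ring
  have hgI : ∫ x, g x * φ x ∂μ = ∫ x, f x ∂μ - ∑' i, ∫ x, fs i x * φ x ∂μ := by
    rw [integral_congr_ae hgeq, integral_sub (hmulint f hf) hSint, hHS.tsum_eq]
    congr 2
    ext x
    by_cases hx : x ∈ B
    · rw [hφE x (by rw [hE]; exact Or.inl hx), mul_one]
    · rw [hfB x hx, zero_mul]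
  have hup : ∫ x, g x * φ x ∂μ ≤ C * lam * (μ (thickening D E)).toReal := by
    have : ∫ x, (thickening D E).indicator (fun _ => C * lam) x ∂μ
        = C * lam * (μ (thickening D E)).toReal := by
      rw [integral_indicator hTm, setIntegral_const, smul_eq_mul, mul_comm]; rfl
    rw [← this]
    refine integral_mono_ae hgint hInd ?_
    filter_upwards [hbd] with x hx
    exact (le_abs_self _).trans hx
  set a : ℕ → ℝ := fun i => ∫ x, |fs i x| ∂μ with ha
  have ha0 : ∀ i, 0 ≤ a i := fun i => integral_nonneg (fun x => abs_nonneg _)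
  have hmed : Summable (fun i => if R ≤ r i ∧ r i < R' then a i else 0) := by
    refine Summable.of_nonneg_of_le ?_ ?_ hsum
    · intro i; split_ifs <;> simp [ha0 i]
    · intro i; split_ifs <;> simp [ha0 i]
  have hbound : ∀ i, ‖∫ x, fs i x * φ x ∂μ‖ ≤
      C * R / D * a i + (if R ≤ r i ∧ r i < R' then a i else 0) := by
    intro i
    have hpos : 0 ≤ C * R / D * a i := mul_nonneg (by positivity) (ha0 i)
    rw [Real.norm_eq_abs]
    by_cases hl : R' ≤ r i
    · have : ∫ x, fs i x * φ x ∂μ = 0 := by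
        rw [← hz i]
        congr 1
        ext x
        by_cases hx : x ∈ Q i
        · rw [hφE x (by rw [hE]; exact Or.inr (mem_biUnion (x := i) hl hx)), mul_one]
        · rw [hQ0 i x hx, zero_mul]
      rw [this, abs_zero]
      split_ifs <;> linarith [ha0 i]
    · by_cases hm : R ≤ r i
      · rw [if_pos ⟨hm, not_le.mp hl⟩]
        have := (abs_integral_le_integral_abs (f := fun x => fs i x * φ x) (μ := μ)).trans
          (habs _ (h1 i))
        linarith
      · rw [if_neg (fun h => hm h.1), add_zero]
        have e : ∫ x, fs i x * φ x ∂μ = ∫ x, fs i x * (φ x - φ (c i)) ∂μ := by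
          have : ∀ x, fs i x * (φ x - φ (c i)) = fs i x * φ x - fs i x * φ (c i) :=
            fun x => by ring
          simp only [this]
          rw [integral_sub (hFint i) ((h1 i).mul_const _), integral_mul_const, hz i]
          ring
        rw [e, ← integral_const_mul]
        refine (abs_integral_le_integral_abs).trans ?_
        refine integral_mono_of_nonneg (Filter.Eventually.of_forall fun x => abs_nonneg _)
          ((h1 i).abs.const_mul _) (Filter.Eventually.of_forall fun x => ?_)
        dsimp only
        by_cases hx : x ∈ Q i
        · rw [abs_mul, mul_comm]
          gcongr
          refine (hφL _ _).trans ?_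
          gcongr
          refine (le_of_lt (hQc i hx)).trans ?_
          gcongr
          exact (not_le.mp hm).le
        · rw [hQ0 i x hx]; simp
  have htot := tsum_of_norm_bounded ((hsum.hasSum.mul_left (C * R / D)).add hmed.hasSum) hbound
  rw [Real.norm_eq_abs] at htot
  have := le_abs_self (∑' i, ∫ x, fs i x * φ x ∂μ)
  linarith

lemma cz_main {M : Type*} [MetricSpace M] [MeasurableSpace M] [BorelSpace M]
    (μ : Measure M) (o : M)
    (hballs : ∀ (x : M) (r : ℝ), μ (ball x r) < ⊤)
    (hinf : μ Set.univ = ⊤)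
    (hCZ : HasCZProperty dist μ) (s : ℝ) (hs : 0 < s)
    (h : ∀ A : Set M, MeasurableSet A → 2 * μ A ≤ μ (thickening s A)) : False := by
  obtain ⟨C, hC, H⟩ := hCZ
  -- a ball of positive measure
  obtain ⟨ρ, hρ⟩ : ∃ n : ℕ, 0 < μ (ball o n) := by
    by_contra! hcon
    have : μ (⋃ n : ℕ, ball o n) = 0 := measure_iUnion_null fun n => le_antisymm (hcon n) zero_le
    rw [iUnion_ball_nat, hinf] at this
    exact absurd this (by simp)
  set B : Set M := ball o ρ with hB
  set m : ℝ := (μ B).toReal with hm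
  have hm0 : 0 < m := ENNReal.toReal_pos hρ.ne' (hballs _ _).ne
  -- constants
  set Λ : ℝ := 8 * C ^ 2 + 1 with hΛ
  have hΛ1 : 1 ≤ Λ := by rw [hΛ]; nlinarith [sq_nonneg C]
  obtain ⟨N, hN⟩ := exists_nat_gt (4 * C)
  have hN0 : 0 < N := by
    have : (0:ℝ) < N := by linarith
    exact_mod_cast this
  obtain ⟨k, hk⟩ := pow_unbounded_of_one_lt (8 * C ^ 2) (one_lt_two (α := ℝ))
  set R : ℕ → ℝ := fun j => (2 * (k+1) * s) * Λ ^ j with hR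
  have hRpos : ∀ j, 0 < R j := fun j => by positivity
  have hRmono : Monotone R := by
    intro i j hij
    simp only [hR]
    gcongr
  set V : ℝ := (μ (ball o (R N + ρ))).toReal with hV
  have hV0 : 0 ≤ V := ENNReal.toReal_nonneg
  set lam : ℝ := m / (8 * C * (V + 1)) with hlamdef
  have hlam : 0 < lam := by positivity
  set f : M → ℝ := B.indicator (fun _ => 1) with hf
  have hBm : MeasurableSet B := measurableSet_ball
  have hfint : Integrable f μ := (integrable_indicator_iff hBm).mpr
    (integrableOn_const (hballs _ _).ne)
  have hfI : ∫ x, f x ∂μ = m := by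
    rw [hf, integral_indicator hBm, setIntegral_const, smul_eq_mul, mul_one]; rfl
  have hfabs : ∫ x, |f x| ∂μ = m := by
    rw [← hfI]; congr 1; ext x
    exact abs_of_nonneg (indicator_nonneg (fun _ _ => zero_le_one) x)
  obtain ⟨fs, g, Q, r, c, h1, hQm, hr, hfg, hQ0, hz, hQc, hQs, hfsum, hg⟩ :=
    H f hfint lam hlam (by
      rw [hinf, ENNReal.mul_top (by simpa using hlam)]; exact ENNReal.ofReal_lt_top)
  rw [hfabs] at hQs hfsum
  set a : ℕ → ℝ := fun i => ∫ x, |fs i x| ∂μ with ha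
  have ha0 : ∀ i, 0 ≤ a i := fun i => integral_nonneg (fun x => abs_nonneg _)
  have hasum : Summable a := by
    have : (∑' i, ENNReal.ofReal (a i)) ≠ ⊤ := ne_top_of_le_ne_top ENNReal.ofReal_ne_top hfsum
    have h2 := ENNReal.summable_toReal this
    simpa only [ENNReal.toReal_ofReal (ha0 _)] using h2
  have hale : ∑' i, a i ≤ C * m := by
    rw [← ENNReal.ofReal_tsum_of_nonneg ha0 hasum] at hfsum
    exact (ENNReal.ofReal_le_ofReal_iff (by positivity)).mp hfsum
  obtain ⟨j, hjN, hj⟩ := cz_pigeon a r ha0 hasum R hRmono N hN0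
  set D : ℝ := R (j+1) / 2 with hD
  have hD0 : 0 < D := half_pos (hRpos _)
  have hkD : k * s ≤ D := by
    have : R 0 ≤ R (j+1) := hRmono (Nat.zero_le _)
    have h0 : R 0 = 2 * (k+1) * s := by simp [hR]
    rw [hD]; nlinarith
  set E : Set M := B ∪ ⋃ i ∈ {i | R (j+1) ≤ r i}, Q i with hE
  -- measure of the thickening
  have hth : μ (thickening D E) ≤ ENNReal.ofReal (V + C * m / lam / 2 ^ k) := by
    have e1 : thickening D E ⊆ thickening D B ∪ ⋃ i, (if R (j+1) ≤ r i then thickening D (Q i) else ∅) := by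
      rw [hE, thickening_union, thickening_biUnion]
      refine union_subset_union_right _ ?_
      refine iUnion₂_subset fun i hi => ?_
      have hi' : R (j+1) ≤ r i := hi
      refine subset_iUnion_of_subset i ?_
      rw [if_pos hi']
    have e2 : μ (thickening D B) ≤ ENNReal.ofReal V := by
      rw [hV, ENNReal.ofReal_toReal (hballs _ _).ne]
      apply measure_mono
      refine (Metric.thickening_ball _ _ _).trans (ball_subset_ball ?_)
      have : R (j+1) ≤ R N := hRmono hjN
      have := hRpos (j+1)
      rw [hD]; linarith
    have e3 : ∀ i, μ (if R (j+1) ≤ r i then thickening D (Q i) else ∅) ≤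
        ((2:ENNReal) ^ k)⁻¹ * μ {y | ∃ q ∈ Q i, dist y q < r i} := by
      intro i
      split_ifs with hi
      · have hit := cz_iter μ s h D (Q i) k
        have hsub : thickening (k * s + D) (Q i) ⊆ {y | ∃ q ∈ Q i, dist y q < r i} := by
          intro y hy
          obtain ⟨q, hq, hyq⟩ := mem_thickening_iff.mp hy
          refine ⟨q, hq, hyq.trans_le ?_⟩
          linarith
        rw [← ENNReal.mul_le_iff_le_inv (by simp) (by simp)]
        exact hit.trans (measure_mono hsub)
      · simp
    calc μ (thickening D E) ≤ μ (thickening D B)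
          + μ (⋃ i, (if R (j+1) ≤ r i then thickening D (Q i) else ∅)) :=
        (measure_mono e1).trans (measure_union_le _ _)
      _ ≤ ENNReal.ofReal V + ∑' i, ((2:ENNReal) ^ k)⁻¹ * μ {y | ∃ q ∈ Q i, dist y q < r i} :=
        add_le_add e2 ((measure_iUnion_le _).trans (ENNReal.tsum_le_tsum e3))
      _ ≤ ENNReal.ofReal V + ((2:ENNReal) ^ k)⁻¹ * ENNReal.ofReal (C * m / lam) := by
        rw [ENNReal.tsum_mul_left]; gcongr
      _ = ENNReal.ofReal (V + C * m / lam / 2 ^ k) := by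
        rw [ENNReal.ofReal_add hV0 (by positivity), ENNReal.ofReal_div_of_pos (y := 2 ^ k) (by positivity),
          ENNReal.ofReal_pow (by norm_num), ENNReal.div_eq_inv_mul]
        simp
  have hthtop : μ (thickening D E) ≠ ⊤ := ne_top_of_le_ne_top ENNReal.ofReal_ne_top hth
  have hthR : (μ (thickening D E)).toReal ≤ V + C * m / lam / 2 ^ k :=
    ENNReal.toReal_le_of_le_ofReal (by positivity) hth
  have hBne : B.Nonempty := nonempty_of_measure_ne_zero hρ.ne'
  have core := cz_core μ f hfint C lam hC hlam fs g Q r c h1 hfg hQ0 hz hQc hasum hg B hBne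
    (fun x hx => indicator_of_notMem hx _) (R j) (R (j+1)) D hD0 (hRpos j) E hE hthtop
  rw [hfI] at core
  have b1 : C * R j / D * (∑' i, a i) ≤ m / 4 := by
    have : C * R j / D = 2 * C / Λ := by
      have hjp := hRpos j
      have : R (j+1) = R j * Λ := by simp only [hR]; ring
      rw [hD, this]
      field_simp
    rw [this]
    calc 2 * C / Λ * (∑' i, a i) ≤ 2 * C / Λ * (C * m) := by gcongr
      _ ≤ m / 4 := by
        rw [div_mul_eq_mul_div, div_le_iff₀ (by linarith), hΛ]
        nlinarith
  have b2 : (∑' i, if R j ≤ r i ∧ r i < R (j+1) then a i else 0) ≤ m / 4 := by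
    refine hj.trans ?_
    rw [div_le_iff₀ (by positivity)]
    nlinarith
  have b3 : C * lam * (μ (thickening D E)).toReal ≤ m / 4 := by
    calc C * lam * (μ (thickening D E)).toReal ≤ C * lam * (V + C * m / lam / 2 ^ k) := by gcongr
      _ = C * lam * V + C ^ 2 * m / 2 ^ k := by field_simp
      _ ≤ m / 8 + m / 8 := by
        refine add_le_add ?_ ?_
        · have : C * lam * V = m / 8 * (V / (V + 1)) := by rw [hlamdef]; field_simp
          rw [this]
          refine mul_le_of_le_one_right (by positivity) ?_
          rw [div_le_one (by positivity)]; linarith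
        · rw [div_le_iff₀ (by positivity)]
          nlinarith
      _ = m / 4 := by ring
  linarith

/-- If a group `M` with a right-invariant metric and a left-invariant Borel measure of
infinite total mass satisfies the Calderón–Zygmund property, then `M` contains
`r`-doubling sets for arbitrarily large `r`. -/
theorem czProperty_implies_doubling_sets
    {M : Type*} [Group M] [MetricSpace M] [MeasurableSpace M] [BorelSpace M]
    (μ : Measure M)
    (hright : ∀ x y g : M, dist (x * g) (y * g) = dist x y)
    (hleft : ∀ (g : M) (A : Set M), μ ((fun x => g * x) ⁻¹' A) = μ A)
    (hballs : ∀ (x : M) (r : ℝ), μ (ball x r) < ⊤)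
    (hinf : μ Set.univ = ⊤)
    (hCZ : HasCZProperty dist μ) :
    ∀ r₀ : ℝ, 0 < r₀ → ∃ r : ℝ, r₀ < r ∧ ∃ A : Set M, MeasurableSet A ∧
      0 < μ A ∧ μ A < ⊤ ∧ μ (ball (1 : M) r * A) ≤ 2 * μ A := by
  intro r₀ hr₀
  by_contra! hcon
  refine cz_main μ 1 hballs hinf hCZ (2 * r₀) (by linarith) ?_
  intro A hA
  rcases eq_or_ne (μ A) 0 with h0 | h0
  · simp [h0]
  by_cases ht : μ A < ⊤
  · have := hcon (2 * r₀) (by linarith) A hA (pos_iff_ne_zero.mpr h0) ht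
    refine this.le.trans (measure_mono ?_)
    rintro _ ⟨b, hb, a, ha, rfl⟩
    refine mem_thickening_iff.mpr ⟨a, ha, ?_⟩
    have := hright b 1 a
    rw [one_mul] at this
    dsimp only
    rw [this]
    exact mem_ball.mp hb
  · have hA' : μ A = ⊤ := not_lt_top_iff.mp ht
    have : μ (thickening (2 * r₀) A) = ⊤ :=
      top_le_iff.mp (hA' ▸ measure_mono (self_subset_thickening (by linarith) A))
    rw [this]; exact le_top

end
end
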